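/- arXiv:0803.0156 — 3 statements merged into one kernel-verified Lean document; each statement's English description precedes it below -/
import Mathlib

section
/- Let g(s) denote the winning probability of the greedy strategy in the full game (number of rounds equal to the total number of cards) on the deck of composition s. If q is obtained from s = (s₁,…,s_v) by inserting an extra value with s_{v+1} cards, then g(q) ≥ g(s); moreover, if all entries of s are positive and s_{v+1} ≥ 1, the inequality is strict. -/
/-- The deck of composition `s` as a list of card values:
`s[i]` copies of value `i+1`, in a canonical order. -/
def deckList (s : List ℕ) : List ℕ :=
  (List.range s.length).flatMap fun i => List.replicate (s.getD i 0) (i + 1)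

/-- `winsAux strat hist m d = true` iff the player using adaptive strategy `strat`
(a function from the list of previously revealed cards to the next bid)
survives `m` rounds when the remaining deck order is `d`, having already seen `hist`. -/
def winsAux (strat : List ℕ → ℕ) : List ℕ → ℕ → List ℕ → Bool
  | _, 0, _ => true
  | _, _ + 1, [] => true
  | hist, m + 1, c :: rest =>
      (strat hist != c) && winsAux strat (hist ++ [c]) m rest

/-- Probability that strategy `strat` wins the `m`-round game against the uniformly
shuffled `s`-deck: the fraction of the `c!` orderings of the deck on which it wins. -/
def winProb (strat : List ℕ → ℕ) (s : List ℕ) (m : ℕ) : ℚ :=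
  (((deckList s).permutations.countP fun d => winsAux strat [] m d) : ℚ)
    / ((deckList s).length.factorial : ℚ)

/-- Number of cards of value `i` remaining from the `s`-deck after the cards in `hist`
have been dealt. -/
def remCount (s : List ℕ) (hist : List ℕ) (i : ℕ) : ℕ :=
  s.getD (i - 1) 0 - hist.count i

/-- The canonical greedy strategy for the `s`-deck: name a least frequent remaining value. -/
def greedyStrat (s : List ℕ) (hist : List ℕ) : ℕ :=
  (((List.range' 1 s.length)).argmin (remCount s hist)).getD 1

/-- `g m s`: the probability that the greedy strategy wins the `m`-round `s`-game. -/
def g (m : ℕ) (s : List ℕ) : ℚ :=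
  winProb (greedyStrat s) s m

/-- `gFull s`: greedy winning probability when all cards are dealt. -/
def gFull (s : List ℕ) : ℚ :=
  g (deckList s).length s

/-- The strategy naming, in order, value `1` `b 1` times, value `2` `b 2` times, etc. -/
def bidStrat (b : List ℕ) (hist : List ℕ) : ℕ :=
  (deckList b).getD hist.length 0

/-- `advProb b s`: winning probability of the advance bid vector `b` against the `s`-deck. -/
def advProb (b s : List ℕ) : ℚ :=
  winProb (bidStrat b) s b.sum

/-- `s` majorizes `q`: every partial sum of `s` is at least that of `q`. -/
def Majorizes (s q : List ℕ) : Prop :=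
  ∀ i, (q.take i).sum ≤ (s.take i).sum

/-- `Pfun s q = ∏_{i : sᵢ > qᵢ} sᵢ (sᵢ-1) ⋯ (qᵢ+1) = ∏_{i : sᵢ > qᵢ} sᵢ!/qᵢ!`. -/
def Pfun (s q : List ℕ) : ℕ :=
  (List.zipWith (fun a b => if b < a then a.factorial / b.factorial else 1) s q).prod

/-- `s` with its `i`-th entry decreased by `1`, re-sorted non-increasingly. -/
def downAt (s : List ℕ) (i : ℕ) : List ℕ :=
  ((s.set i (s.getD i 0 - 1)).mergeSort fun a b => decide (b ≤ a))

/-- `strat` plays greedily at position `hist`. -/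
def GreedyAt (s : List ℕ) (strat : List ℕ → ℕ) (hist : List ℕ) : Prop :=
  strat hist ∈ List.range' 1 s.length ∧
    ∀ j ∈ List.range' 1 s.length, remCount s hist (strat hist) ≤ remCount s hist j

/-- `strat` plays anti-greedily at `hist`: it names a most frequent remaining value. -/
def AntiGreedyAt (s : List ℕ) (strat : List ℕ → ℕ) (hist : List ℕ) : Prop :=
  strat hist ∈ List.range' 1 s.length ∧
    ∀ j ∈ List.range' 1 s.length, remCount s hist j ≤ remCount s hist (strat hist)

/-- `hist` is a position reachable with positive probability by `strat` in the `m`-round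
`s`-game: it is part of the deck, fewer than `m` cards have been dealt, and `strat`
survived all rounds so far. -/
def Reachable (strat : List ℕ → ℕ) (s : List ℕ) (m : ℕ) (hist : List ℕ) : Prop :=
  hist.length < m ∧ List.Subperm hist (deckList s) ∧ winsAux strat [] hist.length hist = true

/-- Binomial coefficient with integer lower index (zero when the lower index is negative). -/
def zchoose (n : ℕ) (k : ℤ) : ℕ :=
  if 0 ≤ k then n.choose k.toNat else 0

open Finset in
/-- Number of winning prefixes (as words) of length `k` under optimal play. -/
def optV {n : ℕ} : ℕ → (Fin n → ℕ) → ℕ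
  | 0, _ => 1
  | k + 1, s => Finset.univ.sup fun m => ∑ c ∈ Finset.univ.erase m,
      if s c = 0 then 0 else optV k (Function.update s c (s c - 1))

/-- Contribution of drawing value `c` next. -/
def optU {n : ℕ} (k : ℕ) (s : Fin n → ℕ) (c : Fin n) : ℕ :=
  if s c = 0 then 0 else optV k (Function.update s c (s c - 1))

theorem optV_succ {n : ℕ} (k : ℕ) (s : Fin n → ℕ) :
    optV (k + 1) s = Finset.univ.sup fun m => ∑ c ∈ Finset.univ.erase m, optU k s c := rfl

theorem le_optV {n : ℕ} (k : ℕ) (s : Fin n → ℕ) (m : Fin n) :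
    ∑ c ∈ Finset.univ.erase m, optU k s c ≤ optV (k + 1) s := by
  rw [optV_succ]
  exact Finset.le_sup (f := fun m => ∑ c ∈ Finset.univ.erase m, optU k s c) (Finset.mem_univ m)

theorem optV_symm_le {n : ℕ} (k : ℕ) : ∀ (s : Fin n → ℕ) (σ : Equiv.Perm (Fin n)),
    optV k (s ∘ σ) ≤ optV k s := by
  induction k with
  | zero => intro s σ; exact le_rfl
  | succ k ih =>
    intro s σ
    rw [optV_succ (s := s ∘ σ)]
    refine Finset.sup_le fun m _ => ?_
    refine le_trans ?_ (le_optV k s (σ m))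
    have h : ∑ c ∈ Finset.univ.erase (σ m), optU k s c
        = ∑ c ∈ Finset.univ.erase m, optU k s (σ c) := by
      symm
      refine Finset.sum_equiv σ ?_ ?_
      · intro i; simp
      · intro i _; rfl
    rw [h]
    refine Finset.sum_le_sum fun c _ => ?_
    unfold optU
    simp only [Function.comp_apply]
    split_ifs
    · exact le_rfl
    · have : Function.update (s ∘ σ) c (s (σ c) - 1)
          = (Function.update s (σ c) (s (σ c) - 1)) ∘ σ := by
        funext d
        by_cases hd : d = c
        · subst hd; simp
        · simp [hd]
      rw [this]
      exact ih _ _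

theorem optV_exch {n : ℕ} (k : ℕ) : ∀ (t : Fin n → ℕ) (i j : Fin n), i ≠ j → t j ≤ t i →
    optV k (Function.update t i (t i + 1)) ≤ optV k (Function.update t j (t j + 1)) := by
  induction k with
  | zero => intros; exact le_rfl
  | succ k ih =>
    intro t i j hij hle
    rcases hle.eq_or_lt with he | hlt
    · have : Function.update t i (t i + 1)
          = (Function.update t j (t j + 1)) ∘ (Equiv.swap i j) := by
        funext d
        by_cases hd : d = i
        · subst hd; simp [he]
        · by_cases hd' : d = j
          · subst hd'; simp [hij, hij.symm, he]
          · simp [hd, hd', Equiv.swap_apply_of_ne_of_ne hd hd']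
      rw [this]
      exact optV_symm_le _ _ _
    · rw [optV_succ (s := Function.update t i (t i + 1))]
      refine Finset.sup_le fun m _ => ?_
      refine le_trans ?_ (le_optV k _ m)
      refine Finset.sum_le_sum fun c _ => ?_
      unfold optU
      by_cases hci : c = i
      · subst hci
        have h0 : t c ≠ 0 := by omega
        simp only [Function.update_self, Function.update_of_ne hij, h0, if_false]
        have := ih (Function.update t c (t c - 1)) c j hij (by
          simp [hij.symm]; omega)
        simp only [Function.update_self, Function.update_of_ne hij.symm, Function.update_idem] at this
        rw [Function.update_comm hij] at this
        have e : t c - 1 + 1 = t c := by omega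
        rw [e] at this
        simpa using this
      · by_cases hcj : c = j
        · subst hcj
          simp only [Function.update_self, Function.update_of_ne hij.symm, Nat.succ_ne_zero, if_false]
          split_ifs with h0
          · exact Nat.zero_le _
          · have := ih (Function.update t c (t c - 1)) i c hij (by
              simp [hij]; omega)
            simp only [Function.update_self, Function.update_of_ne hij, Function.update_idem] at this
            rw [Function.update_comm hij.symm] at this
            have e : t c - 1 + 1 = t c := by omega
            rw [e] at this
            simpa using this
        · simp only [Function.update_of_ne hci, Function.update_of_ne hcj]
          split_ifs with h0
          · exact le_rfl
          · have := ih (Function.update t c (t c - 1)) i j hij (by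
              simp [Ne.symm hci, Ne.symm hcj]; omega)
            simp only [Function.update_of_ne (Ne.symm hci), Function.update_of_ne (Ne.symm hcj)] at this
            rw [Function.update_comm hci, Function.update_comm hcj] at this
            exact this

theorem optU_le {n : ℕ} (k : ℕ) (s : Fin n → ℕ) (i j : Fin n) (h : s j ≤ s i) :
    optU k s j ≤ optU k s i := by
  by_cases hij : i = j
  · subst hij; exact le_rfl
  unfold optU
  split_ifs with h1 h2 h2
  · exact le_rfl
  · exact Nat.zero_le _
  · omega
  · have := optV_exch k (Function.update (Function.update s j (s j - 1)) i (s i - 1)) i j hij (by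
      simp [Ne.symm hij]; omega)
    have e1 : s i - 1 + 1 = s i := by omega
    have e2 : s j - 1 + 1 = s j := by omega
    simp only [Function.update_self, Function.update_of_ne (Ne.symm hij), Function.update_idem, e1, e2] at this
    have f1 : Function.update (Function.update s j (s j - 1)) i (s i)
        = Function.update s j (s j - 1) := by
      funext d
      by_cases hd : d = i
      · subst hd; simp [hij]
      · simp [hd]
    have f2 : Function.update (Function.update (Function.update s j (s j - 1)) i (s i - 1)) j (s j)
        = Function.update s i (s i - 1) := by
      funext d
      by_cases hd : d = j
      · subst hd; simp [Ne.symm hij]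
      · by_cases hd' : d = i
        · subst hd'; simp [hd]
        · simp [hd, hd']
    rwa [f1, f2] at this

theorem optV_greedy {n : ℕ} (k : ℕ) (s : Fin n → ℕ) (m : Fin n) (hm : ∀ i, s m ≤ s i) :
    optV (k + 1) s = ∑ c ∈ Finset.univ.erase m, optU k s c := by
  refine le_antisymm ?_ (le_optV k s m)
  rw [optV_succ]
  refine Finset.sup_le fun m' _ => ?_
  have h1 := Finset.sum_erase_add Finset.univ (optU k s) (Finset.mem_univ m)
  have h2 := Finset.sum_erase_add Finset.univ (optU k s) (Finset.mem_univ m')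
  have h3 := optU_le k s m' m (hm m')
  omega

theorem sum_erase_succAbove {n : ℕ} (p : Fin (n + 1)) (m : Fin n) (f : Fin (n + 1) → ℕ) :
    ∑ c ∈ Finset.univ.erase (p.succAbove m), f c
      = f p + ∑ c ∈ Finset.univ.erase m, f (p.succAbove c) := by
  have h1 := Finset.sum_erase_add Finset.univ f (Finset.mem_univ (p.succAbove m))
  have h2 := Finset.sum_erase_add Finset.univ (fun c => f (p.succAbove c)) (Finset.mem_univ m)
  have h3 := Fin.sum_univ_succAbove f p
  omega

theorem exists_opt {n : ℕ} (hn : 1 ≤ n) (k : ℕ) (s : Fin n → ℕ) :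
    ∃ m, optV (k + 1) s = ∑ c ∈ Finset.univ.erase m, optU k s c := by
  have : Nonempty (Fin n) := ⟨⟨0, hn⟩⟩
  obtain ⟨m, _, hm⟩ := Finset.exists_mem_eq_sup (Finset.univ : Finset (Fin n))
    Finset.univ_nonempty (fun m => ∑ c ∈ Finset.univ.erase m, optU k s c)
  exact ⟨m, hm⟩

theorem update_p_comp {n : ℕ} (p : Fin (n + 1)) (t : Fin (n + 1) → ℕ) (y : ℕ) :
    (fun i => Function.update t p y (p.succAbove i)) = fun i => t (p.succAbove i) := by
  funext i; simp

theorem update_sA_comp {n : ℕ} (p : Fin (n + 1)) (t : Fin (n + 1) → ℕ) (c : Fin n) (y : ℕ) :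
    (fun i => Function.update t (p.succAbove c) y (p.succAbove i))
      = Function.update (fun i => t (p.succAbove i)) c y := by
  funext i
  by_cases h : i = c
  · subst h; simp
  · simp [h]

theorem sum_dec {n : ℕ} (s : Fin n → ℕ) (c : Fin n) (a : ℕ) (h : s c ≠ 0)
    (hs : ∑ i, s i = a + 1) : ∑ i, Function.update s c (s c - 1) i = a := by
  have h1 := Finset.sum_erase_add Finset.univ s (Finset.mem_univ c)
  have h2 := Finset.sum_erase_add Finset.univ (Function.update s c (s c - 1)) (Finset.mem_univ c)
  rw [Function.update_self] at h2
  have h3 : ∑ i ∈ Finset.univ.erase c, Function.update s c (s c - 1) i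
      = ∑ i ∈ Finset.univ.erase c, s i :=
    Finset.sum_congr rfl fun i hi => by
      rw [Function.update_of_ne (Finset.ne_of_mem_erase hi)]
  omega

theorem insert_le {n : ℕ} (hn : 1 ≤ n) (p : Fin (n + 1)) (k : ℕ) :
    ∀ (a x : ℕ) (t : Fin (n + 1) → ℕ), a + x = k → t p = x → ∑ i, t (p.succAbove i) = a →
    (a + x).choose x * optV a (fun i => t (p.succAbove i)) ≤ optV (a + x) t := by
  induction k with
  | zero =>
    intro a x t h hx ha
    obtain rfl : a = 0 := by omega
    obtain rfl : x = 0 := by omega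
    simp [optV]
  | succ k ih =>
    intro a x t h hx ha
    -- contribution of the extra value
    have hp : ∀ x', x = x' + 1 →
        (a + x').choose x' * optV a (fun i => t (p.succAbove i)) ≤ optU (a + x') t p := by
      intro x' hx'
      have := ih a x' (Function.update t p x') (by omega) (by simp) (by simpa using ha)
      rw [update_p_comp] at this
      unfold optU
      rw [if_neg (by omega)]
      have e : t p - 1 = x' := by omega
      rw [e]; exact this
    cases a with
    | zero =>
      obtain ⟨x', rfl⟩ : ∃ x', x = x' + 1 := ⟨x - 1, by omega⟩
      have h1 := hp x' rfl
      have h2 := le_optV (0 + x') t (p.succAbove ⟨0, hn⟩)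
      rw [sum_erase_succAbove] at h2
      simp only [zero_add, Nat.choose_self] at *
      omega
    | succ a =>
      obtain ⟨m, hm⟩ := exists_opt hn a (fun i => t (p.succAbove i))
      have hk : a + 1 + x = (a + x) + 1 := by omega
      have h2 := le_optV (a + x) t (p.succAbove m)
      rw [sum_erase_succAbove] at h2
      have h3 : (a + x).choose x * optV (a + 1) (fun i => t (p.succAbove i))
          ≤ ∑ c ∈ Finset.univ.erase m, optU (a + x) t (p.succAbove c) := by
        rw [hm, Finset.mul_sum]
        refine Finset.sum_le_sum fun c _ => ?_
        unfold optU
        split_ifs with h0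
        · simp
        · have := ih a x (Function.update t (p.succAbove c) (t (p.succAbove c) - 1)) (by omega)
            (by rw [Function.update_of_ne (Fin.ne_succAbove p c)]; exact hx)
            (by
              have := sum_dec (fun i => t (p.succAbove i)) c a h0 ha
              rw [← update_sA_comp] at this
              exact this)
          rw [update_sA_comp] at this
          exact this
      rw [hk]
      cases x with
      | zero => simp only [Nat.choose_zero_right, one_mul] at *; omega
      | succ x =>
        have h1 := hp x rfl
        have e : a + 1 + x = a + (x + 1) := by omega
        rw [e] at h1
        rw [Nat.choose_succ_succ' (a + (x + 1)) x, add_mul]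
        omega

theorem optV_pos {n : ℕ} (p : Fin n) (k : ℕ) : ∀ t : Fin n → ℕ, t p = 0 → ∑ i, t i = k →
    0 < optV k t := by
  induction k with
  | zero => intro t _ _; simp [optV]
  | succ k ih =>
    intro t hp hs
    obtain ⟨c, hc⟩ : ∃ c, t c ≠ 0 := by
      by_contra! hcon
      simp [hcon] at hs
    have hcp : c ≠ p := by rintro rfl; exact hc hp
    refine lt_of_lt_of_le ?_ (le_optV k t p)
    refine lt_of_lt_of_le ?_ (Finset.single_le_sum (f := optU k t) (fun _ _ => Nat.zero_le _)
      (Finset.mem_erase.2 ⟨hcp, Finset.mem_univ c⟩))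
    unfold optU
    rw [if_neg hc]
    exact ih _ (by rw [Function.update_of_ne hcp.symm]; exact hp) (sum_dec t c k hc hs)

theorem insert_lt {n : ℕ} (hn : 1 ≤ n) (p : Fin (n + 1)) (a x : ℕ) :
    ∀ (t : Fin (n + 1) → ℕ), t p = x → ∑ i, t (p.succAbove i) = a →
    (∀ i, 0 < t (p.succAbove i)) →
    (a + x).choose x * optV a (fun i => t (p.succAbove i)) < optV (a + x) t := by
  induction x with
  | zero =>
    intro t hx ha hpos
    obtain ⟨b, rfl⟩ : ∃ b, a = b + 1 := by
      have := Finset.single_le_sum (f := fun i => t (p.succAbove i)) (fun _ _ => Nat.zero_le _)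
        (Finset.mem_univ (⟨0, hn⟩ : Fin n))
      have h2 := hpos ⟨0, hn⟩
      exact ⟨a - 1, by omega⟩
    obtain ⟨m, hm⟩ := exists_opt hn b (fun i => t (p.succAbove i))
    simp only [Nat.choose_zero_right, one_mul, add_zero]
    rw [hm]
    refine lt_of_lt_of_le ?_ (le_optV b t p)
    have h1 : ∑ c ∈ Finset.univ.erase p, optU b t c = ∑ c, optU b t (p.succAbove c) := by
      have h1 := Finset.sum_erase_add Finset.univ (optU b t) (Finset.mem_univ p)
      have h3 := Fin.sum_univ_succAbove (optU b t) p
      omega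
    rw [h1, ← Finset.sum_erase_add Finset.univ _ (Finset.mem_univ m)]
    have hsd : ∀ c, ∑ i, Function.update t (p.succAbove c) (t (p.succAbove c) - 1) (p.succAbove i)
        = b := by
      intro c
      have := sum_dec (fun i => t (p.succAbove i)) c b (hpos c).ne' ha
      rw [← update_sA_comp] at this
      exact this
    have hle : ∑ c ∈ Finset.univ.erase m, optU b (fun i => t (p.succAbove i)) c
        ≤ ∑ c ∈ Finset.univ.erase m, optU b t (p.succAbove c) := by
      refine Finset.sum_le_sum fun c _ => ?_
      unfold optU
      split_ifs with h0
      · exact le_rfl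
      · have := insert_le hn p b b 0
          (Function.update t (p.succAbove c) (t (p.succAbove c) - 1)) rfl
          (by rw [Function.update_of_ne (Fin.ne_succAbove p c)]; exact hx) (hsd c)
        rw [update_sA_comp] at this
        simpa using this
    have hlt : 0 < optU b t (p.succAbove m) := by
      unfold optU
      rw [if_neg (hpos m).ne']
      refine optV_pos p b _ (by rw [Function.update_of_ne (Fin.ne_succAbove p m)]; exact hx) ?_
      rw [Fin.sum_univ_succAbove _ p, Function.update_of_ne (Fin.ne_succAbove p m), hx, hsd m,
        zero_add]
    omega
  | succ x ih =>
    intro t hx ha hpos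
    obtain ⟨b, rfl⟩ : ∃ b, a = b + 1 := by
      have := Finset.single_le_sum (f := fun i => t (p.succAbove i)) (fun _ _ => Nat.zero_le _)
        (Finset.mem_univ (⟨0, hn⟩ : Fin n))
      have h2 := hpos ⟨0, hn⟩
      exact ⟨a - 1, by omega⟩
    obtain ⟨m, hm⟩ := exists_opt hn b (fun i => t (p.succAbove i))
    have hp : (b + 1 + x).choose x * optV (b + 1) (fun i => t (p.succAbove i))
        < optU (b + 1 + x) t p := by
      have := ih (Function.update t p x) (by simp) (by simpa using ha) (by simpa using hpos)
      rw [update_p_comp] at this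
      unfold optU
      rw [if_neg (by omega)]
      have e : t p - 1 = x := by omega
      rw [e]; exact this
    have h2 := le_optV (b + 1 + x) t (p.succAbove m)
    rw [sum_erase_succAbove] at h2
    have h3 : (b + 1 + x).choose (x + 1) * optV (b + 1) (fun i => t (p.succAbove i))
        ≤ ∑ c ∈ Finset.univ.erase m, optU (b + 1 + x) t (p.succAbove c) := by
      rw [hm, Finset.mul_sum]
      refine Finset.sum_le_sum fun c _ => ?_
      unfold optU
      split_ifs with h0
      · simp
      · have := insert_le hn p _ b (x + 1)
          (Function.update t (p.succAbove c) (t (p.succAbove c) - 1)) rfl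
          (by rw [Function.update_of_ne (Fin.ne_succAbove p c)]; exact hx)
          (by
            have := sum_dec (fun i => t (p.succAbove i)) c b h0 ha
            rw [← update_sA_comp] at this
            exact this)
        rw [update_sA_comp] at this
        have e : b + 1 + x = b + (x + 1) := by omega
        rw [e]
        exact this
    have hk : b + 1 + (x + 1) = (b + 1 + x) + 1 := by omega
    rw [hk, Nat.choose_succ_succ' (b + 1 + x) x, add_mul]
    omega

/-! ### Counting over permutations -/

/-- Sum of `f` over all permutations of `l`. -/
def permSum (f : List ℕ → ℕ) (l : List ℕ) : ℕ := (l.permutations'.map f).sum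

theorem permSum_perm (f : List ℕ → ℕ) {l l' : List ℕ} (h : l.Perm l') :
    permSum f l = permSum f l' :=
  ((h.permutations').map f).sum_eq

/-- All ways to pick one element of a list, with the rest. -/
def picks : List ℕ → List (ℕ × List ℕ)
  | [] => []
  | a :: l => (a, l) :: (picks l).map fun z => (z.1, a :: z.2)

theorem picks_fst (l : List ℕ) : (picks l).map Prod.fst = l := by
  induction l with
  | nil => rfl
  | cons a l ih => simp only [picks, List.map_cons, List.map_map]; congr 1

theorem picks_perm (l : List ℕ) : ∀ z ∈ picks l, l.Perm (z.1 :: z.2) := by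
  induction l with
  | nil => intro z hz; simp [picks] at hz
  | cons a l ih =>
    intro z hz
    simp only [picks, List.mem_cons, List.mem_map] at hz
    rcases hz with rfl | ⟨w, hw, rfl⟩
    · exact List.Perm.refl _
    · exact ((ih w hw).cons a).trans (List.Perm.swap _ _ _)

theorem permSum_cons (f : List ℕ → ℕ) (a : ℕ) (l : List ℕ) :
    permSum f (a :: l) = permSum (fun w => ((List.permutations'Aux a w).map f).sum) l := by
  unfold permSum
  simp only [List.permutations', List.flatMap_def]
  rw [List.map_flatten, List.sum_flatten, List.map_map, List.map_map]
  rfl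

theorem permSum_add (f h : List ℕ → ℕ) (l : List ℕ) :
    permSum (fun w => f w + h w) l = permSum f l + permSum h l := by
  unfold permSum
  exact List.sum_map_add

theorem permSum_picks (l : List ℕ) : ∀ f : List ℕ → ℕ, l ≠ [] →
    permSum f l = ((picks l).map fun z => permSum (fun w => f (z.1 :: w)) z.2).sum := by
  induction l with
  | nil => intro f h; exact absurd rfl h
  | cons a l ih =>
    intro f _
    rw [permSum_cons]
    by_cases hl : l = []
    · subst hl; simp [permSum, picks]
    let f' : List ℕ → ℕ := fun w => match w with
      | [] => 0
      | c :: w' => ((List.permutations'Aux a w').map fun z => f (c :: z)).sum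
    have e : (fun w => ((List.permutations'Aux a w).map f).sum) = fun w => f (a :: w) + f' w := by
      funext w
      cases w with
      | nil => simp [f']
      | cons c w => simp [f', List.map_map, Function.comp_def]
    rw [e, permSum_add, ih f' hl]
    simp only [picks, List.map_cons, List.sum_cons, List.map_map]
    congr 2
    refine List.map_congr_left fun z _ => ?_
    simp only [Function.comp_apply]
    rw [permSum_cons]

theorem permSum_erase (f : List ℕ → ℕ) (l : List ℕ) (hl : l ≠ []) :
    permSum f l = (l.map fun c => permSum (fun w => f (c :: w)) (l.erase c)).sum := by
  rw [permSum_picks l f hl]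
  conv_rhs => rw [← picks_fst l, List.map_map]
  rw [picks_fst]
  congr 1
  refine List.map_congr_left fun z hz => ?_
  simp only [Function.comp_apply]
  apply permSum_perm
  have := (picks_perm l z hz).erase z.1
  simp only [List.erase_cons_head] at this
  exact this.symm

theorem sum_list_fin {n : ℕ} (F : ℕ → ℕ) (l : List ℕ) (h : ∀ c ∈ l, 1 ≤ c ∧ c ≤ n) :
    (l.map F).sum = ∑ i : Fin n, l.count (i.1 + 1) * F (i.1 + 1) := by
  induction l with
  | nil => simp
  | cons a l ih =>
    obtain ⟨h1, h2⟩ := h a (by simp)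
    rw [List.map_cons, List.sum_cons, ih fun c hc => h c (by simp [hc])]
    simp only [List.count_cons, add_mul, Finset.sum_add_distrib]
    rw [add_comm]
    congr 1
    rw [Finset.sum_eq_single (⟨a - 1, by omega⟩ : Fin n)]
    · have : a - 1 + 1 = a := by omega
      simp [this]
    · intro b _ hb
      have : a ≠ b.1 + 1 := by
        rintro rfl
        exact hb (Fin.ext (by simp))
      simp [this]
    · simp

theorem greedy_spec (s hist : List ℕ) (n : ℕ) (hs : s.length = n) (hn : 1 ≤ n) :
    ∃ m : Fin n, greedyStrat s hist = m.1 + 1 ∧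
      ∀ i : Fin n, remCount s hist (m.1 + 1) ≤ remCount s hist (i.1 + 1) := by
  unfold greedyStrat
  rw [hs]
  cases h : (List.range' 1 n).argmin (remCount s hist) with
  | none =>
    rw [List.argmin_eq_none] at h
    simp at h
    omega
  | some v =>
    have hv := List.argmin_mem (Option.mem_def.2 h)
    rw [List.mem_range'_1] at hv
    refine ⟨⟨v - 1, by omega⟩, by simp; omega, fun i => ?_⟩
    have e : v - 1 + 1 = v := by omega
    simp only [e]
    exact List.le_of_mem_argmin (l := List.range' 1 n) (by rw [List.mem_range'_1]; omega)
      (Option.mem_def.2 h)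

theorem greedy_count (s : List ℕ) (n : ℕ) (hs : s.length = n) (hn : 1 ≤ n) (k : ℕ) :
    ∀ (hist d : List ℕ), d.length = k → (∀ c ∈ d, 1 ≤ c ∧ c ≤ n) →
    (∀ i : Fin n, d.count (i.1 + 1) = remCount s hist (i.1 + 1)) →
    permSum (fun w => if winsAux (greedyStrat s) hist k w = true then 1 else 0) d
      = optV k (fun i : Fin n => d.count (i.1 + 1)) * ∏ i : Fin n, (d.count (i.1 + 1)).factorial := by
  induction k with
  | zero =>
    intro hist d hd _ _
    rw [List.length_eq_zero_iff] at hd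
    subst hd
    simp [permSum, winsAux, optV]
  | succ k ih =>
    intro hist d hd hr hc
    have hne : d ≠ [] := by rintro rfl; simp at hd
    obtain ⟨m, hm, hmin⟩ := greedy_spec s hist n hs hn
    rw [permSum_erase _ _ hne, sum_list_fin _ d hr,
      optV_greedy k _ m (by intro i; simp only [hc]; exact hmin i),
      ← Finset.sum_erase_add _ _ (Finset.mem_univ m), Finset.sum_mul]
    have hz : permSum (fun w => if winsAux (greedyStrat s) hist (k + 1) ((m.1 + 1) :: w) = true
        then 1 else 0) (d.erase (m.1 + 1)) = 0 := by
      simp [winsAux, hm, permSum]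
    rw [hz, mul_zero, add_zero]
    refine Finset.sum_congr rfl fun c hcm => ?_
    have hcm' : c ≠ m := Finset.ne_of_mem_erase hcm
    have hcv : m.1 ≠ c.1 := fun h => hcm' (Fin.ext h.symm)
    unfold optU
    split_ifs with h0
    · simp [h0]
    have hmem : c.1 + 1 ∈ d := List.count_pos_iff.1 (Nat.pos_of_ne_zero h0)
    have hcount : ∀ i : Fin n, (d.erase (c.1 + 1)).count (i.1 + 1)
        = Function.update (fun i : Fin n => d.count (i.1 + 1)) c (d.count (c.1 + 1) - 1) i := by
      intro i
      by_cases hi : i = c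
      · subst hi; simp
      · have : i.1 + 1 ≠ c.1 + 1 := fun h => hi (Fin.ext (by omega))
        simp [hi, List.count_erase_of_ne this]
    have := ih (hist ++ [c.1 + 1]) (d.erase (c.1 + 1))
      (by rw [List.length_erase_of_mem hmem]; omega)
      (fun v hv => hr v (List.mem_of_mem_erase hv))
      (by
        intro i
        have h1 := hc i
        unfold remCount at h1 ⊢
        rw [hcount, List.count_append]
        by_cases hi : i = c
        · subst hi; simp at h1 ⊢; omega
        · have h2 : c.1 + 1 ≠ i.1 + 1 := fun h => hi (Fin.ext (by omega))
          have h3 : List.count (i.1 + 1) [c.1 + 1] = 0 := by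
            rw [List.count_singleton]; simp [h2]; omega
          rw [Function.update_of_ne hi, h3]; exact h1)
    have e : (fun w => if winsAux (greedyStrat s) hist (k + 1) ((c.1 + 1) :: w) = true
        then 1 else 0) = fun w => if winsAux (greedyStrat s) (hist ++ [c.1 + 1]) k w = true
        then 1 else 0 := by
      funext w
      simp [winsAux, hm, hcv]
    rw [e, this]
    simp only [hcount]
    rw [← Finset.mul_prod_erase Finset.univ _ (Finset.mem_univ c),
      ← Finset.mul_prod_erase Finset.univ (fun i : Fin n => (d.count (i.1 + 1)).factorial)
        (Finset.mem_univ c)]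
    have hpr : ∏ i ∈ Finset.univ.erase c, (Function.update (fun i : Fin n => d.count (i.1 + 1)) c
        (d.count (c.1 + 1) - 1) i).factorial
        = ∏ i ∈ Finset.univ.erase c, (d.count (i.1 + 1)).factorial :=
      Finset.prod_congr rfl fun i hi => by
        rw [Function.update_of_ne (Finset.ne_of_mem_erase hi)]
    rw [hpr, Function.update_self, ← Nat.mul_factorial_pred h0]
    ring_nf

theorem count_deckList (s : List ℕ) (i : ℕ) (hi : i < s.length) :
    (deckList s).count (i + 1) = s.getD i 0 := by
  unfold deckList
  rw [List.count_flatMap]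
  have : (List.count (i + 1) ∘ fun j => List.replicate (s.getD j 0) (j + 1))
      = fun j => if j = i then s.getD i 0 else 0 := by
    funext j
    simp only [Function.comp_apply, List.count_replicate]
    by_cases h : j = i
    · subst h; simp
    · simp [h]
  rw [this]
  have h2 := Finset.sum_ite_eq' (Finset.range s.length) i (fun _ => s.getD i 0)
  simp only [Finset.mem_range, hi, if_true] at h2
  exact h2

theorem length_deckList (s : List ℕ) (n : ℕ) (hs : s.length = n) :
    (deckList s).length = ∑ i : Fin n, s.getD i.1 0 := by
  subst hs
  unfold deckList
  rw [List.length_flatMap]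
  simp only [List.length_replicate]
  rw [Fin.sum_univ_eq_sum_range (fun i => s.getD i 0)]
  rfl

theorem mem_deckList (s : List ℕ) (c : ℕ) (h : c ∈ deckList s) : 1 ≤ c ∧ c ≤ s.length := by
  unfold deckList at h
  simp only [List.mem_flatMap, List.mem_range, List.mem_replicate] at h
  obtain ⟨i, hi, _, rfl⟩ := h
  omega

theorem gFull_eq (s : List ℕ) (n : ℕ) (hs : s.length = n) (hn : 1 ≤ n) :
    gFull s = ((optV (∑ i : Fin n, s.getD i.1 0) (fun i : Fin n => s.getD i.1 0)
      * ∏ i : Fin n, (s.getD i.1 0).factorial : ℕ) : ℚ) /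
      ((∑ i : Fin n, s.getD i.1 0).factorial : ℚ) := by
  have hcnt : ∀ i : Fin n, (deckList s).count (i.1 + 1) = s.getD i.1 0 := fun i =>
    count_deckList s i.1 (by omega)
  have key := greedy_count s n hs hn (deckList s).length [] (deckList s) rfl
    (fun c hc => hs ▸ mem_deckList s c hc)
    (by intro i; rw [hcnt]; simp [remCount])
  simp only [hcnt] at key
  rw [length_deckList s n hs] at key
  unfold gFull g winProb
  rw [← key, length_deckList s n hs]
  congr 2
  rw [(List.permutations_perm_permutations' _).countP_eq]
  unfold permSum
  generalize (deckList s).permutations' = L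
  induction L with
  | nil => rfl
  | cons a L ih => rw [List.countP_cons, List.map_cons, List.sum_cons, ih, add_comm]

/-- Inserting an extra value (with any number of cards) into the deck cannot decrease
the greedy winning probability of the full game; if all entries of `s` are positive
and the inserted entry is at least `1`, it strictly increases. -/
theorem stmt9 (s : List ℕ) (hs : 1 ≤ s.length) (k : ℕ) (hk : k ≤ s.length) (x : ℕ) :
    gFull s ≤ gFull (s.take k ++ x :: s.drop k) ∧
      ((∀ a ∈ s, 0 < a) → 1 ≤ x →
        gFull s < gFull (s.take k ++ x :: s.drop k)) := by
  obtain ⟨n, hn⟩ : ∃ n, s.length = n := ⟨_, rfl⟩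
  have hn1 : 1 ≤ n := hn ▸ hs
  set q := s.take k ++ x :: s.drop k with hq
  have hql : q.length = n + 1 := by simp [hq]; omega
  let p : Fin (n + 1) := ⟨k, by omega⟩
  have hqp : q.getD p.1 0 = x := by
    simp [hq, p, List.getD_eq_getElem?_getD, List.getElem?_append, hk]
  have hqs : ∀ i : Fin n, q.getD (p.succAbove i).1 0 = s.getD i.1 0 := by
    intro i
    by_cases hi : i.1 < k
    · rw [Fin.succAbove_of_castSucc_lt p i (by simp [p, Fin.lt_def, hi])]
      simp [hq, List.getD_eq_getElem?_getD, List.getElem?_append, hi,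
        show i.1 < s.length by omega]
    · rw [Fin.succAbove_of_le_castSucc p i (by simp [p, Fin.le_def]; omega)]
      have e : i.1 + 1 - k = (i.1 - k) + 1 := by omega
      have e2 : k + (i.1 - k) = i.1 := by omega
      have e3 : ¬ (i.1 + 1 < k) := by omega
      simp [hq, List.getD_eq_getElem?_getD, List.getElem?_append, hk, e, e2, e3]
  rw [gFull_eq s n hn hn1, gFull_eq q (n + 1) hql (by omega)]
  obtain ⟨a, ha⟩ : ∃ a, ∑ i : Fin n, s.getD i.1 0 = a := ⟨_, rfl⟩
  have hsum : ∑ i : Fin (n + 1), q.getD i.1 0 = a + x := by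
    rw [Fin.sum_univ_succAbove _ p, hqp]
    simp only [hqs]
    omega
  have hprod : ∏ i : Fin (n + 1), (q.getD i.1 0).factorial
      = x.factorial * ∏ i : Fin n, (s.getD i.1 0).factorial := by
    rw [Fin.prod_univ_succAbove _ p, hqp]
    simp only [hqs]
  have hfun : (fun i : Fin n => (fun i : Fin (n + 1) => q.getD i.1 0) (p.succAbove i))
      = fun i : Fin n => s.getD i.1 0 := by
    funext i; exact hqs i
  rw [ha, hsum, hprod]
  set A := ∏ i : Fin n, (s.getD i.1 0).factorial with hA
  have hApos : 0 < A := Finset.prod_pos fun i _ => Nat.factorial_pos _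
  have hle := insert_le hn1 p _ a x (fun i : Fin (n + 1) => q.getD i.1 0) rfl hqp
    (by simp only [hqs]; exact ha)
  rw [hfun] at hle
  have hf : (a + x).choose x * x.factorial * a.factorial = (a + x).factorial := by
    have := Nat.choose_mul_factorial_mul_factorial (Nat.le_add_left x a)
    simpa using this
  have h1 : (0 : ℚ) < (a.factorial : ℚ) := by exact_mod_cast Nat.factorial_pos a
  have h2 : (0 : ℚ) < ((a + x).factorial : ℚ) := by exact_mod_cast Nat.factorial_pos _
  constructor
  · rw [div_le_div_iff₀ h1 h2]
    norm_cast
    rw [← hf]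
    calc _ = ((a + x).choose x * optV a (fun i : Fin n => s.getD i.1 0))
          * (x.factorial * A * a.factorial) := by ring
      _ ≤ _ * (x.factorial * A * a.factorial) := Nat.mul_le_mul_right _ hle
      _ = _ := by ring
  · intro hpos _
    have hlt := insert_lt hn1 p a x (fun i : Fin (n + 1) => q.getD i.1 0) hqp
      (by simp only [hqs]; exact ha)
      (by
        intro i
        simp only [hqs]
        have : i.1 < s.length := by omega
        rw [List.getD_eq_getElem _ _ this]
        exact hpos _ (List.getElem_mem _))
    rw [hfun] at hlt
    rw [div_lt_div_iff₀ h1 h2]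
    norm_cast
    rw [← hf]
    calc _ = ((a + x).choose x * optV a (fun i : Fin n => s.getD i.1 0))
          * (x.factorial * A * a.factorial) := by ring
      _ < _ * (x.factorial * A * a.factorial) :=
        Nat.mul_lt_mul_of_pos_right hlt
          (Nat.mul_pos (Nat.mul_pos (Nat.factorial_pos _) hApos) (Nat.factorial_pos _))
      _ = _ := by ring
end

section
/- For every integer ℓ ≥ 1 and real ε > 0 there exists v₀ such that for every deck composition s = (s₁,…,s_v) with v ≥ v₀ and 1 ≤ sᵢ ≤ ℓ for all i, the greedy strategy wins the full game with probability g(s) ≥ 1 - ε. -/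
lemma countP_permutations_eq (L : List ℕ) (p : List ℕ → Bool) :
    L.permutations.countP p =
      (Finset.univ.filter fun σ : Equiv.Perm (Fin L.length) =>
        p (List.ofFn fun k => L.get (σ k)) = true).card := by
  classical
  have h1 : L = (List.finRange L.length).map L.get := by simp
  have h2 : L.permutations = (List.finRange L.length).permutations.map (List.map L.get) := by
    conv_lhs => rw [h1]
    rw [List.map_permutations]
  rw [h2, List.countP_map, List.countP_eq_length_filter]
  have hnd : (List.finRange L.length).permutations.Nodup :=
    List.nodup_permutations _ (List.nodup_finRange _)
  rw [← List.toFinset_card_of_nodup (hnd.filter _)]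
  symm
  refine Finset.card_bij (fun (σ : Equiv.Perm (Fin L.length)) _ => List.ofFn σ) ?_ ?_ ?_
  · intro σ hσ
    simp only [Finset.mem_filter, Finset.mem_univ, true_and] at hσ
    simp only [List.mem_toFinset, List.mem_filter, List.mem_permutations, Function.comp]
    refine ⟨?_, ?_⟩
    · exact Equiv.Perm.ofFn_comp_perm σ id |>.trans (by simp [List.ofFn_id])
    · rw [List.map_ofFn]; exact hσ
  · intro σ _ τ _ h
    exact Equiv.ext fun x => congrFun (List.ofFn_injective h) x
  · intro l hl
    simp only [List.mem_toFinset, List.mem_filter, List.mem_permutations, Function.comp] at hl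
    obtain ⟨hp, hl⟩ := hl
    have hlen : l.length = L.length := by simpa using hp.length_eq
    have hn : l.Nodup := hp.nodup_iff.2 (List.nodup_finRange _)
    let φ : Fin L.length → Fin L.length := fun k => l.get (k.cast hlen.symm)
    have hφ : Function.Injective φ := by
      intro a b h
      have := (List.nodup_iff_injective_get.1 hn) h
      simpa using this
    let σ := Equiv.ofBijective φ (Finite.injective_iff_bijective.1 hφ)
    have hσ : List.ofFn σ = l := by
      apply List.ext_get
      · simp [hlen]
      · intro n h1 h2
        simp [σ, φ]
    refine ⟨σ, ?_, hσ⟩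
    simp only [Finset.mem_filter, Finset.mem_univ, true_and]
    rw [← hσ, List.map_ofFn] at hl
    exact hl

lemma winsAux_iff (strat : List ℕ → ℕ) (d : List ℕ) : ∀ (hist : List ℕ),
    (∀ k (h : k < d.length), strat (hist ++ d.take k) ≠ d[k]) →
      winsAux strat hist d.length d = true := by
  induction d with
  | nil => intro hist _; rfl
  | cons c rest ih =>
    intro hist h
    simp only [List.length_cons, winsAux, Bool.and_eq_true, bne_iff_ne]
    refine ⟨?_, ih _ ?_⟩
    · have h0 := h 0 (by simp)
      rw [List.take_zero, List.append_nil] at h0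
      exact h0
    intro k hk
    have := h (k+1) (by simpa using hk)
    simpa using this

lemma hit_card (N ℓ : ℕ) (f : Fin N → ℕ) (strat : List ℕ → ℕ)
    (hf : ∀ c, (Finset.univ.filter fun a => f a = c).card ≤ ℓ) (t : Fin N) :
    (Finset.univ.filter fun σ : Equiv.Perm (Fin N) =>
      strat ((List.ofFn fun k => f (σ k)).take t) = f (σ t)).card * (N - t)
      ≤ ℓ * N.factorial := by
  classical
  set G : Equiv.Perm (Fin N) → ℕ := fun σ => strat ((List.ofFn fun k => f (σ k)).take t) with hG
  have hinv : ∀ σ : Equiv.Perm (Fin N), ∀ j : Fin N, t ≤ j → G (σ * Equiv.swap t j) = G σ := by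
    intro σ j hj
    simp only [hG]
    congr 1
    apply List.ext_getElem
    · simp
    · intro n h1 h2
      simp only [List.length_take, List.length_ofFn, lt_min_iff] at h1
      simp only [List.getElem_take, List.getElem_ofFn, Equiv.Perm.coe_mul, Function.comp]
      rw [Equiv.swap_apply_of_ne_of_ne]
      · intro h; have := congrArg Fin.val h; simp at this; omega
      · intro h; have := congrArg Fin.val h; have := Fin.le_def.1 hj; simp at *; omega
  have h1 : ∀ j ∈ Finset.Ici t, (Finset.univ.filter fun σ : Equiv.Perm (Fin N) =>
      G σ = f (σ t)).card = (Finset.univ.filter fun σ : Equiv.Perm (Fin N) =>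
      G σ = f (σ j)).card := by
    intro j hj
    rw [Finset.mem_Ici] at hj
    apply Finset.card_bij (fun σ _ => σ * Equiv.swap t j)
    · intro σ hσ
      simp only [Finset.mem_filter, Finset.mem_univ, true_and] at hσ ⊢
      rw [hinv σ j hj, hσ]; simp
    · intro σ _ τ _ h; exact mul_right_cancel h
    · intro σ hσ
      refine ⟨σ * Equiv.swap t j, ?_, by simp [mul_assoc]⟩
      simp only [Finset.mem_filter, Finset.mem_univ, true_and] at hσ ⊢
      rw [hinv σ j hj, hσ]; simp
  calc _ = ∑ j ∈ Finset.Ici t, (Finset.univ.filter fun σ : Equiv.Perm (Fin N) =>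
      G σ = f (σ j)).card := by
        rw [← Finset.sum_congr rfl h1, Finset.sum_const, Fin.card_Ici, smul_eq_mul, mul_comm]
    _ = ∑ σ : Equiv.Perm (Fin N), ((Finset.Ici t).filter fun j => G σ = f (σ j)).card := by
        simp only [Finset.card_filter]
        rw [Finset.sum_comm]
    _ ≤ ∑ σ : Equiv.Perm (Fin N), ℓ := by
        apply Finset.sum_le_sum
        intro σ _
        refine le_trans ?_ (hf (G σ))
        apply Finset.card_le_card_of_injOn σ
        · intro j hj
          simp only [Finset.coe_filter, Finset.mem_Ici, Set.mem_ofPred_eq, Finset.mem_univ, true_and] at hj ⊢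
          exact hj.2.symm
        · exact σ.injective.injOn
    _ = ℓ * N.factorial := by
        simp [Fintype.card_perm, mul_comm]

/-- number of permutations with all of `A` placed among the first `K` positions -/
def qcount (N K : ℕ) (A : Finset (Fin N)) : ℕ :=
  (Finset.univ.filter fun σ : Equiv.Perm (Fin N) => ∀ a ∈ A, ((σ⁻¹ a : Fin N) : ℕ) < K).card

lemma qcount_insert (N K : ℕ) (hK : K ≤ N) (A : Finset (Fin N)) (a : Fin N) (ha : a ∉ A) :
    (N - A.card) * qcount N K (insert a A) = (K - A.card) * qcount N K A := by
  classical
  have h1 : ∀ b ∈ Aᶜ, qcount N K (insert b A) = qcount N K (insert a A) := by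
    intro b hb
    rw [Finset.mem_compl] at hb
    have key : ∀ σ : Equiv.Perm (Fin N), ∀ x y : Fin N, x ∉ A → y ∉ A →
        (∀ z ∈ insert x A, ((σ⁻¹ z : Fin N) : ℕ) < K) →
        (∀ z ∈ insert y A, (((Equiv.swap x y * σ)⁻¹ z : Fin N) : ℕ) < K) := by
      intro σ x y hx hy h z hz
      simp only [mul_inv_rev, Equiv.swap_inv, Equiv.Perm.coe_mul, Function.comp]
      rcases Finset.mem_insert.1 hz with hzy | hzA
      · rw [hzy]; simpa using h x (by simp)
      · rw [Equiv.swap_apply_of_ne_of_ne]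
        · exact h z (by simp [hzA])
        · intro h; exact hx (h ▸ hzA)
        · intro h; exact hy (h ▸ hzA)
    unfold qcount
    apply Finset.card_bij (fun σ _ => Equiv.swap b a * σ)
    · intro σ hσ
      simp only [Finset.mem_filter, Finset.mem_univ, true_and] at hσ ⊢
      exact key σ b a hb ha hσ
    · intro σ _ τ _ h; exact mul_left_cancel h
    · intro σ hσ
      refine ⟨Equiv.swap b a * σ, ?_, by simp [← mul_assoc]⟩
      simp only [Finset.mem_filter, Finset.mem_univ, true_and] at hσ ⊢
      rw [Equiv.swap_comm]
      exact key σ a b ha hb hσ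
  have h2 : ∑ b ∈ Aᶜ, qcount N K (insert b A) = (N - A.card) * qcount N K (insert a A) := by
    rw [Finset.sum_congr rfl h1, Finset.sum_const, Finset.card_compl, Fintype.card_fin, smul_eq_mul]
  rw [← h2]
  unfold qcount
  simp only [Finset.card_filter]
  rw [Finset.sum_comm, Finset.mul_sum]
  apply Finset.sum_congr rfl
  intro σ _
  by_cases hA : ∀ x ∈ A, ((σ⁻¹ x : Fin N) : ℕ) < K
  · have : (Finset.univ.filter fun b : Fin N => ((σ⁻¹ b : Fin N) : ℕ) < K).card = K := by
      have : (Finset.univ.filter fun b : Fin N => ((σ⁻¹ b : Fin N) : ℕ) < K).card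
          = (Finset.univ.filter fun b : Fin N => (b : ℕ) < K).card := by
        apply Finset.card_bij (fun b _ => σ⁻¹ b)
        · intro b hb; simpa using hb
        · intro b _ c _ h; exact (σ⁻¹).injective h
        · intro b hb; exact ⟨σ b, by simpa using hb, by simp⟩
      rw [this, Fin.card_filter_val_lt]; simp [hK]
    rw [if_pos hA, mul_one, ← Finset.card_filter]
    have h3 : (Aᶜ.filter fun b => ∀ x ∈ insert b A, ((σ⁻¹ x : Fin N) : ℕ) < K)
        = (Finset.univ.filter fun b : Fin N => ((σ⁻¹ b : Fin N) : ℕ) < K) \ A := by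
      ext b
      simp only [Finset.mem_filter, Finset.mem_compl, Finset.mem_sdiff, Finset.mem_univ, true_and,
        Finset.forall_mem_insert]
      tauto
    rw [h3, Finset.card_sdiff_of_subset, this]
    intro x hx; simpa using hA x hx
  · rw [if_neg hA, mul_zero]
    apply Finset.sum_eq_zero
    intro b _
    rw [if_neg]
    intro h; exact hA fun x hx => h x (by simp [hx])

noncomputable def rr (N K k : ℕ) : ℝ := ∏ j ∈ Finset.range k, (((K : ℝ) - j) / ((N : ℝ) - j))

lemma qcount_eq (N K : ℕ) (hK : K < N) (A : Finset (Fin N)) (hA : A.card ≤ K) :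
    (qcount N K A : ℝ) = N.factorial * rr N K A.card := by
  classical
  induction A using Finset.induction_on with
  | empty => simp [qcount, rr, Fintype.card_perm]
  | insert a A ha ih =>
    rw [Finset.card_insert_of_notMem ha] at hA ⊢
    have h := qcount_insert N K hK.le A a ha
    have ih := ih (by omega)
    have h' : ((N : ℝ) - A.card) * qcount N K (insert a A) = ((K : ℝ) - A.card) * qcount N K A := by
      rw [← Nat.cast_sub (by omega), ← Nat.cast_sub (by omega)]; exact_mod_cast h
    have hpos : (0 : ℝ) < (N : ℝ) - A.card := by
      rw [sub_pos]; exact_mod_cast (by omega)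
    rw [rr, Finset.prod_range_succ, ← rr]
    rw [ih] at h'
    field_simp
    linarith

lemma rr_nonneg (N K k : ℕ) (hK : K < N) (hk : k ≤ K) : 0 ≤ rr N K k := by
  apply Finset.prod_nonneg
  intro j hj
  have hj := Finset.mem_range.1 hj
  apply div_nonneg <;> rw [sub_nonneg] <;> exact_mod_cast (by omega)

lemma rr_add_le (N K a b : ℕ) (hK : K < N) (hab : a + b ≤ K) :
    rr N K (a + b) ≤ rr N K a * rr N K b := by
  induction b with
  | zero => simp [rr]
  | succ b ih =>
    have ih := ih (by omega)
    rw [← add_assoc, rr, Finset.prod_range_succ, ← rr]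
    conv_rhs => rw [rr.eq_1 N K (b+1), Finset.prod_range_succ, ← rr, ← mul_assoc]
    have hKN : (K : ℝ) < N := by exact_mod_cast hK
    have hab' : (a : ℝ) + b + 1 ≤ K := by exact_mod_cast hab
    have ha : (0:ℝ) ≤ a := by positivity
    have hb : (0:ℝ) ≤ b := by positivity
    apply mul_le_mul ih
    · push_cast
      rw [div_le_div_iff₀ (by linarith) (by linarith)]
      nlinarith
    · push_cast
      apply div_nonneg <;> linarith
    · exact mul_nonneg (rr_nonneg _ _ _ hK (by omega)) (rr_nonneg _ _ _ hK (by omega))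

lemma rr_lower (N K k ℓ : ℕ) (hK : K < N) (hk : k ≤ ℓ) (hℓ : ℓ ≤ K) :
    (((K : ℝ) - ℓ) / N) ^ ℓ ≤ rr N K k := by
  have hKN : (K : ℝ) < N := by exact_mod_cast hK
  have hlK : (ℓ : ℝ) ≤ K := by exact_mod_cast hℓ
  have hl : (0:ℝ) ≤ ℓ := by positivity
  have h0 : 0 ≤ ((K : ℝ) - ℓ) / N := div_nonneg (by linarith) (by linarith)
  have h1 : ((K : ℝ) - ℓ) / N ≤ 1 := by rw [div_le_one (by linarith)]; linarith
  calc (((K : ℝ) - ℓ) / N) ^ ℓ ≤ (((K : ℝ) - ℓ) / N) ^ k := pow_le_pow_of_le_one h0 h1 hk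
    _ = ∏ j ∈ Finset.range k, (((K : ℝ) - ℓ) / N) := by
      rw [Finset.prod_const, Finset.card_range]
    _ ≤ _ := by
      apply Finset.prod_le_prod
      · intros; exact h0
      · intro j hj
        have hj := Finset.mem_range.1 hj
        have hj' : (j : ℝ) ≤ ℓ := by exact_mod_cast (by omega)
        have : (0:ℝ) ≤ j := by positivity
        apply div_le_div₀ <;> linarith

lemma exhaust_bound (N K v ℓ : ℕ) (hK : K < N) (hℓ : 2 * ℓ ≤ K) (A : Fin v → Finset (Fin N))
    (hc : ∀ i, (A i).card ≤ ℓ) (hd : ∀ i j, i ≠ j → Disjoint (A i) (A j)) (ρ : ℝ) (hρ : 0 < ρ)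
    (hv : 0 < v)
    (hr : ∀ i, ρ ≤ rr N K (A i).card) :
    ((Finset.univ.filter fun σ : Equiv.Perm (Fin N) =>
      ∀ i, ¬ ∀ a ∈ A i, ((σ⁻¹ a : Fin N) : ℕ) < K).card : ℝ) * (v * ρ) ≤ N.factorial := by
  classical
  let I : Fin v → Equiv.Perm (Fin N) → ℝ := fun i σ =>
    if ∀ a ∈ A i, ((σ⁻¹ a : Fin N) : ℕ) < K then 1 else 0
  let r : Fin v → ℝ := fun i => rr N K (A i).card
  let μ : ℝ := ∑ i, r i
  let F : ℝ := N.factorial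
  have hF : 0 < F := by simp only [F]; exact_mod_cast N.factorial_pos
  have hE : ∀ i, ∑ σ, I i σ = F * r i := by
    intro i
    rw [← qcount_eq N K hK (A i) (by have := hc i; omega)]
    simp [I, qcount]
  have hE2 : ∀ i j, ∑ σ, I i σ * I j σ ≤ F * (r i * r j) + if i = j then F * r i else 0 := by
    intro i j
    by_cases hij : i = j
    · subst hij
      have : ∀ σ, I i σ * I i σ = I i σ := by intro σ; simp only [I]; split_ifs <;> simp
      simp only [this, hE, if_true]
      have : 0 ≤ F * (r i * r i) := mul_nonneg hF.le (mul_self_nonneg _)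
      linarith
    · rw [if_neg hij, add_zero]
      have h1 : ∑ σ, I i σ * I j σ = qcount N K (A i ∪ A j) := by
        simp only [I, qcount, Finset.card_filter, Finset.mem_union, or_imp, forall_and]
        push_cast
        apply Finset.sum_congr rfl
        intro σ _
        by_cases h1 : ∀ a ∈ A i, ((σ⁻¹ a : Fin N) : ℕ) < K <;>
        by_cases h2 : ∀ a ∈ A j, ((σ⁻¹ a : Fin N) : ℕ) < K
        · rw [if_pos h1, if_pos h2, if_pos ⟨h1, h2⟩, one_mul]
        · rw [if_neg h2, mul_zero, if_neg]; exact fun h => h2 h.2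
        · rw [if_neg h1, zero_mul, if_neg]; exact fun h => h1 h.1
        · rw [if_neg h1, zero_mul, if_neg]; exact fun h => h1 h.1
      have h2 := hc i
      have h3 := hc j
      rw [h1, qcount_eq N K hK _ (by rw [Finset.card_union_of_disjoint (hd i j hij)]; omega),
        Finset.card_union_of_disjoint (hd i j hij)]
      exact mul_le_mul_of_nonneg_left (rr_add_le _ _ _ _ hK (by omega)) hF.le
  have hμ : (v : ℝ) * ρ ≤ μ := by
    have : ∑ i : Fin v, ρ ≤ μ := Finset.sum_le_sum fun i _ => hr i
    simpa using this
  have hvρ : 0 < (v : ℝ) * ρ := by positivity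
  have hsum : ∑ σ, (∑ i, I i σ - μ)^2 ≤ F * μ := by
    have e1 : ∑ σ, (∑ i, I i σ) = F * μ := by
      rw [Finset.sum_comm]; simp only [hE, μ, Finset.mul_sum]
    have e2 : ∑ σ, (∑ i, I i σ)^2 ≤ F * μ^2 + F * μ := by
      calc ∑ σ, (∑ i, I i σ)^2 = ∑ i, ∑ j, ∑ σ, I i σ * I j σ := by
            simp only [sq, Finset.sum_mul_sum]
            rw [Finset.sum_comm]
            apply Finset.sum_congr rfl
            intro i _
            rw [Finset.sum_comm]
        _ ≤ ∑ i, ∑ j, (F * (r i * r j) + if i = j then F * r i else 0) :=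
            Finset.sum_le_sum fun i _ => Finset.sum_le_sum fun j _ => hE2 i j
        _ = F * μ^2 + F * μ := by
            simp only [Finset.sum_add_distrib, Finset.sum_ite_eq, Finset.mem_univ, if_true,
              ← Finset.mul_sum, sq, μ, Finset.sum_mul_sum]
    have e3 : ∑ σ : Equiv.Perm (Fin N), μ^2 = F * μ^2 := by
      simp [F, Fintype.card_perm]
    have : ∀ σ, (∑ i, I i σ - μ)^2 = (∑ i, I i σ)^2 - 2 * μ * (∑ i, I i σ) + μ^2 := by
      intro σ; ring
    simp only [this, Finset.sum_add_distrib, Finset.sum_sub_distrib, ← Finset.mul_sum, e1, e3]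
    nlinarith
  have hlow : ((Finset.univ.filter fun σ : Equiv.Perm (Fin N) =>
      ∀ i, ¬ ∀ a ∈ A i, ((σ⁻¹ a : Fin N) : ℕ) < K).card : ℝ) * μ^2 ≤
      ∑ σ, (∑ i, I i σ - μ)^2 := by
    calc _ = ∑ σ ∈ (Finset.univ.filter fun σ : Equiv.Perm (Fin N) =>
      ∀ i, ¬ ∀ a ∈ A i, ((σ⁻¹ a : Fin N) : ℕ) < K), (∑ i, I i σ - μ)^2 := by
          rw [← nsmul_eq_mul, ← Finset.sum_const]
          apply Finset.sum_congr rfl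
          intro σ hσ
          have hσ := (Finset.mem_filter.1 hσ).2
          have : ∑ i, I i σ = 0 := Finset.sum_eq_zero fun i _ => if_neg (hσ i)
          rw [this]; ring
      _ ≤ _ := Finset.sum_le_sum_of_subset_of_nonneg (Finset.filter_subset _ _)
          fun _ _ _ => sq_nonneg _
  have hμ0 : 0 < μ := lt_of_lt_of_le hvρ hμ
  have h3 := hlow.trans hsum
  set P : ℝ := ((Finset.univ.filter fun σ : Equiv.Perm (Fin N) =>
      ∀ i, ¬ ∀ a ∈ A i, ((σ⁻¹ a : Fin N) : ℕ) < K).card : ℝ)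
  have hP : 0 ≤ P := Nat.cast_nonneg _
  have h4 : P * μ ≤ F := by
    apply le_of_mul_le_mul_right _ hμ0
    calc P * μ * μ = P * μ^2 := by ring
      _ ≤ _ := h3
  exact (mul_le_mul_of_nonneg_left hμ hP).trans h4

lemma count_deck_succ (s : List ℕ) (i : ℕ) : (deckList s).count (i + 1) = s.getD i 0 := by
  unfold deckList
  rw [List.count_flatMap]
  have : (List.count (i+1) ∘ fun j => List.replicate (s.getD j 0) (j + 1))
      = fun j => if j = i then s.getD i 0 else 0 := by
    funext j
    simp only [Function.comp, List.count_replicate]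
    by_cases h : j = i <;> simp [h]
  rw [this]
  have h2 : ∀ n, (List.map (fun j => if j = i then s.getD i 0 else 0) (List.range n)).sum
      = if i < n then s.getD i 0 else 0 := by
    intro n
    induction n with
    | zero => simp
    | succ n ih =>
      rw [List.range_succ, List.map_append, List.sum_append, ih]
      simp only [List.map_cons, List.map_nil, List.sum_cons, List.sum_nil, add_zero]
      split_ifs <;> omega
  rw [h2]
  split_ifs with h
  · rfl
  · rw [List.getD_eq_default _ _ (by omega)]

lemma count_deck_zero (s : List ℕ) : (deckList s).count 0 = 0 := by
  unfold deckList
  rw [List.count_eq_zero]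
  simp

lemma count_deck_le (s : List ℕ) (ℓ : ℕ) (hs : ∀ a ∈ s, 1 ≤ a ∧ a ≤ ℓ) (c : ℕ) :
    (deckList s).count c ≤ ℓ := by
  cases c with
  | zero => rw [count_deck_zero]; omega
  | succ i =>
    rw [count_deck_succ]
    by_cases h : i < s.length
    · rw [List.getD_eq_getElem _ _ h]; exact (hs _ (List.getElem_mem h)).2
    · rw [List.getD_eq_default _ _ (by omega)]; omega

lemma deck_length (s : List ℕ) (ℓ : ℕ) (hs : ∀ a ∈ s, 1 ≤ a ∧ a ≤ ℓ) :
    s.length ≤ (deckList s).length ∧ (deckList s).length ≤ ℓ * s.length := by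
  have h : ∀ n, n ≤ s.length →
      n ≤ ((List.range n).flatMap fun i => List.replicate (s.getD i 0) (i + 1)).length ∧
      ((List.range n).flatMap fun i => List.replicate (s.getD i 0) (i + 1)).length ≤ ℓ * n := by
    intro n
    induction n with
    | zero => simp
    | succ n ih =>
      intro hn
      obtain ⟨h1, h2⟩ := ih (by omega)
      rw [List.range_succ, List.flatMap_append, List.length_append]
      simp only [List.flatMap_cons, List.flatMap_nil, List.append_nil, List.length_replicate]
      rw [List.getD_eq_getElem _ _ (by omega : n < s.length)]
      have := hs _ (List.getElem_mem (by omega : n < s.length))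
      rw [mul_add, mul_one]
      omega
  exact h _ le_rfl

lemma card_fiber (L : List ℕ) (c : ℕ) :
    (Finset.univ.filter fun a : Fin L.length => L.get a = c).card = L.count c := by
  have h := Fin.card_filter_univ_eq_vector_get_eq_count c (⟨L, rfl⟩ : List.Vector ℕ L.length)
  rw [show L.count c = (List.Vector.toList (⟨L, rfl⟩ : List.Vector ℕ L.length)).count c from rfl, ← h]
  congr 1

lemma greedy_late (s d : List ℕ) (hd : d.Perm (deckList s)) (i k : ℕ) (hi : i < s.length)
    (hk : k < d.length) (hex : (i + 1) ∉ d.drop k) :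
    greedyStrat s (d.take k) ≠ d[k] := by
  have hi0 : remCount s (d.take k) (i + 1) = 0 := by
    unfold remCount
    rw [Nat.add_sub_cancel, ← count_deck_succ, ← hd.count_eq]
    conv_lhs => rw [← List.take_append_drop k d]
    rw [List.count_append, List.count_eq_zero.2 hex]
    simp
  have hmem : i + 1 ∈ List.range' 1 s.length := by
    rw [List.mem_range'_1]; omega
  unfold greedyStrat
  rcases hm : (List.range' 1 s.length).argmin (remCount s (d.take k)) with _ | c
  · rw [List.argmin_eq_none] at hm
    rw [hm] at hmem; simp at hmem
  · simp only [Option.getD_some]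
    intro hc
    have hcm : c ∈ List.range' 1 s.length := List.argmin_mem hm
    have hle := List.le_of_mem_argmin hmem hm
    rw [hi0] at hle
    rw [List.mem_range'_1] at hcm
    obtain ⟨j, rfl⟩ : ∃ j, c = j + 1 := ⟨c - 1, by omega⟩
    unfold remCount at hle
    rw [Nat.add_sub_cancel, ← count_deck_succ, ← hd.count_eq] at hle
    have h1 : d.count (j+1) = (d.take k).count (j+1) + (d.drop k).count (j+1) := by
      rw [← List.count_append, List.take_append_drop]
    have h2 : 0 < (d.drop k).count (j+1) := by
      rw [List.count_pos_iff, List.drop_eq_getElem_cons hk, hc]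
      exact List.mem_cons_self
    omega

lemma core_bound (s : List ℕ) (ℓ K : ℕ) (hs : ∀ a ∈ s, 1 ≤ a ∧ a ≤ ℓ) (hℓ : 1 ≤ ℓ)
    (hK : 2 * ℓ ≤ K) (hKv : K < s.length) :
    1 - (K * ℓ / ((s.length : ℝ) - K) + 1 / (s.length * (((K : ℝ) - ℓ) / (ℓ * s.length)) ^ ℓ))
      ≤ ((gFull s : ℚ) : ℝ) := by
  classical
  obtain ⟨hN1, hN2⟩ := deck_length s ℓ hs
  unfold gFull g winProb
  rw [countP_permutations_eq]
  set L := deckList s with hL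
  set N := L.length with hN
  set v := s.length with hv
  have hKN : K < N := by omega
  have hlen : ∀ σ : Equiv.Perm (Fin N), (List.ofFn fun k => L.get (σ k)).length = N := by
    intro σ; simp
  set W := (Finset.univ.filter fun σ : Equiv.Perm (Fin N) =>
        winsAux (greedyStrat s) [] N (List.ofFn fun k => L.get (σ k)) = true) with hW
  let H : Fin N → Finset (Equiv.Perm (Fin N)) := fun t => Finset.univ.filter fun σ =>
      greedyStrat s ((List.ofFn fun k => L.get (σ k)).take t) = L.get (σ t)
  let A : Fin v → Finset (Fin N) := fun i => Finset.univ.filter fun a => L.get a = i + 1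
  let E := Finset.univ.filter fun σ : Equiv.Perm (Fin N) =>
      ∀ i, ¬ ∀ a ∈ A i, ((σ⁻¹ a : Fin N) : ℕ) < K
  let T := Finset.univ.filter fun t : Fin N => (t : ℕ) < K
  have hcover : Finset.univ ⊆ W ∪ (E ∪ T.biUnion H) := by
    intro σ _
    by_contra hcon
    simp only [Finset.mem_union, not_or] at hcon
    obtain ⟨hσW, hσE, hσH⟩ := hcon
    simp only [E, Finset.mem_filter, Finset.mem_univ, true_and] at hσE
    obtain ⟨i, hi⟩ := not_forall.1 hσE
    have hi := not_not.1 hi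
    apply hσW
    simp only [hW, Finset.mem_filter, Finset.mem_univ, true_and]
    have hperm : (List.ofFn fun k => L.get (σ k)).Perm L := by
      have := Equiv.Perm.ofFn_comp_perm σ L.get
      rw [List.ofFn_get] at this
      exact this
    have := winsAux_iff (greedyStrat s) (List.ofFn fun k => L.get (σ k)) [] ?_
    · rw [hlen] at this; exact this
    intro k hk
    rw [List.nil_append]
    by_cases hkK : k < K
    · intro h
      apply hσH
      rw [hlen] at hk
      simp only [Finset.mem_biUnion]
      refine ⟨⟨k, hk⟩, by simpa [T] using hkK, ?_⟩
      simp only [H, Finset.mem_filter, Finset.mem_univ, true_and]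
      rw [h, List.getElem_ofFn]
    · apply greedy_late s _ hperm i k i.2 hk
      intro hm
      rw [List.mem_drop_iff_getElem] at hm
      obtain ⟨m, hm, hme⟩ := hm
      rw [hlen] at hm
      rw [List.getElem_ofFn] at hme
      have := hi (σ ⟨k + m, by omega⟩) (by simpa [A] using hme)
      simp at this
      omega
  have hcard : N.factorial ≤ W.card + (E.card + ∑ t ∈ T, (H t).card) := by
    have h1 := Finset.card_le_card hcover
    rw [Finset.card_univ, Fintype.card_perm, Fintype.card_fin] at h1
    exact h1.trans ((Finset.card_union_le _ _).trans (Nat.add_le_add_left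
      ((Finset.card_union_le _ _).trans (Nat.add_le_add_left Finset.card_biUnion_le _)) _))
  set F : ℝ := (N.factorial : ℝ) with hF
  have hF0 : 0 < F := by rw [hF]; exact_mod_cast N.factorial_pos
  have hKvR : (K : ℝ) < v := by exact_mod_cast hKv
  have hvN : (v : ℝ) ≤ N := by exact_mod_cast hN1
  have hNv : (N : ℝ) ≤ ℓ * v := by exact_mod_cast hN2
  have hlR : (1 : ℝ) ≤ ℓ := by exact_mod_cast hℓ
  have hlK : 2 * (ℓ : ℝ) ≤ K := by exact_mod_cast hK
  have hHt : ∀ t ∈ T, ((H t).card : ℝ) ≤ ℓ * F / ((v : ℝ) - K) := by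
    intro t ht
    have htK : (t : ℕ) < K := by simpa [T] using ht
    have h := hit_card N ℓ L.get (greedyStrat s)
      (fun c => by rw [card_fiber]; exact count_deck_le s ℓ hs c) t
    have h' : ((H t).card : ℝ) * ((N - t : ℕ) : ℝ) ≤ ℓ * F := by
      rw [hF]; exact_mod_cast h
    rw [Nat.cast_sub (by omega)] at h'
    rw [le_div_iff₀ (by linarith)]
    have : (t : ℝ) ≤ K := by exact_mod_cast htK.le
    refine le_trans (mul_le_mul_of_nonneg_left ?_ (Nat.cast_nonneg _)) h'
    linarith
  have hHs : (∑ t ∈ T, ((H t).card : ℝ)) ≤ K * ℓ / ((v : ℝ) - K) * F := by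
    have h1 := Finset.sum_le_sum hHt
    have hT : T.card = K := by
      simp only [T]; rw [Fin.card_filter_val_lt]; simp [hKN.le]
    rw [Finset.sum_const, hT, nsmul_eq_mul] at h1
    refine h1.trans (le_of_eq ?_)
    ring
  set ρ : ℝ := (((K : ℝ) - ℓ) / (ℓ * v)) ^ ℓ with hρ
  have hρ0 : 0 < ρ := by
    apply pow_pos; apply div_pos
    · linarith
    · nlinarith
  have hE : (E.card : ℝ) ≤ 1 / (v * ρ) * F := by
    have h := exhaust_bound N K v ℓ hKN hK A
      (fun i => by simp only [A]; rw [card_fiber]; exact count_deck_le s ℓ hs _)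
      (fun i j hij => by
        rw [Finset.disjoint_left]
        intro a ha hb
        simp only [A, Finset.mem_filter, Finset.mem_univ, true_and] at ha hb
        apply hij; apply Fin.ext; omega) ρ hρ0 (by omega)
      (fun i => by
        refine le_trans ?_ (rr_lower N K _ ℓ hKN (by
          simp only [A]; rw [card_fiber]; exact count_deck_le s ℓ hs _) (by omega))
        apply pow_le_pow_left₀
        · apply div_nonneg
          · linarith
          · nlinarith
        · apply div_le_div_of_nonneg_left <;> linarith)
    have hvρ : 0 < (v : ℝ) * ρ := mul_pos (by linarith) hρ0
    rw [div_mul_eq_mul_div, one_mul, le_div_iff₀ hvρ]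
    exact h
  have hcR : F ≤ W.card + (E.card + ∑ t ∈ T, ((H t).card : ℝ)) := by
    rw [hF]; exact_mod_cast hcard
  push_cast
  rw [le_div_iff₀ hF0]
  linarith

/-- For bounded multiplicities, the greedy winning probability of the full game tends
to `1` as the number of values grows. -/
theorem stmt11 (ℓ : ℕ) (hℓ : 1 ≤ ℓ) (ε : ℝ) (hε : 0 < ε) :
    ∃ v₀ : ℕ, ∀ s : List ℕ, v₀ ≤ s.length →
      (∀ a ∈ s, 1 ≤ a ∧ a ≤ ℓ) → (1 : ℝ) - ε ≤ ((gFull s : ℚ) : ℝ) := by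
  have hlR : (1 : ℝ) ≤ ℓ := by exact_mod_cast hℓ
  have hl0 : (0 : ℝ) < ℓ := by linarith
  obtain ⟨δ, hδ0, hδ1, hδ2⟩ : ∃ δ : ℝ, 0 < δ ∧ δ ≤ 1 / 2 ∧ δ ≤ ε / (4 * ℓ) :=
    ⟨min (1 / 2) (ε / (4 * ℓ)), by positivity, min_le_left _ _, min_le_right _ _⟩
  set c : ℝ := (δ / (2 * ℓ)) ^ ℓ with hc
  have hc0 : 0 < c := by positivity
  refine ⟨⌈max (2 * (1 + ℓ) / δ) (2 / (ε * c))⌉₊, fun s hsv hs => ?_⟩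
  have hmax := Nat.ceil_le.1 hsv
  set v : ℝ := (s.length : ℝ) with hv
  have h1 : 2 * (1 + (ℓ : ℝ)) ≤ δ * v := by
    have := (le_max_left _ _).trans hmax
    rw [div_le_iff₀ hδ0] at this; linarith
  have h2 : 2 / (ε * c) ≤ v := (le_max_right _ _).trans hmax
  have hv0 : 0 < v := by
    by_contra h; push Not at h; nlinarith
  have hKle : ((⌊δ * v⌋₊ : ℕ) : ℝ) ≤ δ * v := Nat.floor_le (by positivity)
  have hKlt : δ * v < (⌊δ * v⌋₊ : ℕ) + 1 := Nat.lt_floor_add_one _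
  have hK1 : 2 * ℓ ≤ ⌊δ * v⌋₊ := Nat.le_floor (by push_cast; linarith)
  set K := ⌊δ * v⌋₊ with hK
  have hhalf : δ * v ≤ v / 2 := by nlinarith
  have hKv : K < s.length := by
    have : (K : ℝ) < v := by linarith
    rw [hv] at this
    exact_mod_cast this
  refine le_trans ?_ (core_bound s ℓ K hs hℓ hK1 hKv)
  have hA : K * ℓ / ((s.length : ℝ) - K) ≤ ε / 2 := by
    rw [← hv, div_le_iff₀ (by linarith)]
    have e1 : δ * (4 * ℓ) ≤ ε := by rwa [le_div_iff₀ (by positivity)] at hδ2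
    calc (K : ℝ) * ℓ ≤ δ * v * ℓ := by gcongr
      _ = δ * (4 * ℓ) * (v / 4) := by ring
      _ ≤ ε * (v / 4) := by gcongr
      _ = ε / 2 * (v / 2) := by ring
      _ ≤ ε / 2 * (v - K) := by gcongr; linarith
  have hB : 1 / (s.length * (((K : ℝ) - ℓ) / (ℓ * s.length)) ^ ℓ) ≤ ε / 2 := by
    rw [← hv]
    have e1 : c ≤ (((K : ℝ) - ℓ) / (ℓ * v)) ^ ℓ := by
      apply pow_le_pow_left₀ (by positivity)
      rw [div_le_div_iff₀ (by positivity) (by positivity)]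
      have : δ * v ≤ 2 * ((K : ℝ) - ℓ) := by linarith
      nlinarith
    have e2 : 2 ≤ v * (ε * c) := by rwa [div_le_iff₀ (by positivity)] at h2
    have e3 : 0 < v * c := by positivity
    calc 1 / (v * (((K : ℝ) - ℓ) / (ℓ * v)) ^ ℓ) ≤ 1 / (v * c) := by
          apply one_div_le_one_div_of_le e3; gcongr
      _ ≤ ε / 2 := by rw [div_le_iff₀ e3]; linarith
  linarith
end

section
/- Let v ≥ 3, s ≥ 1, s = (s,…,s) a regular v-vector, and m ≤ sv, excluding the case (v,s,m) = (3,1,3). Then the advance bids b = (b₁,…,b_v) with Σbᵢ = m maximizing the winning probability Pr(b,s) are exactly the almost regular vectors, i.e., those with every bᵢ ∈ {⌊m/v⌋, ⌈m/v⌉}. -/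
open MvPolynomial in
/-- swap-antisymmetric polynomials with nonnegative coefficients on the half `n i ≤ n j` -/
def QA {σ : Type*} [DecidableEq σ] (i j : σ) (g : MvPolynomial σ ℤ) : Prop :=
  rename (Equiv.swap i j) g = -g ∧ ∀ n : σ →₀ ℕ, n i ≤ n j → 0 ≤ coeff n g

/-- the semiring of good multipliers -/
noncomputable def GG {σ : Type*} [DecidableEq σ] (i j : σ) : Subsemiring (MvPolynomial σ ℤ) :=
  Subsemiring.closure
    ({MvPolynomial.X i + MvPolynomial.X j, MvPolynomial.X i * MvPolynomial.X j} ∪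
      {p | ∃ l, l ≠ i ∧ l ≠ j ∧ p = MvPolynomial.X l})

section poly
open MvPolynomial

variable {σ : Type*} [DecidableEq σ] {i j : σ}

theorem QA.add {g h : MvPolynomial σ ℤ} (hg : QA i j g) (hh : QA i j h) : QA i j (g + h) := by
  refine ⟨by rw [map_add, hg.1, hh.1]; ring, fun n hn => ?_⟩
  rw [coeff_add]
  exact add_nonneg (hg.2 n hn) (hh.2 n hn)

theorem QA.zero : QA i j (0 : MvPolynomial σ ℤ) := by
  refine ⟨by simp, fun n hn => by simp⟩

theorem mapDomain_swap (n : σ →₀ ℕ) (h : n i = n j) :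
    Finsupp.mapDomain (Equiv.swap i j) (n - Finsupp.single i 1) = n - Finsupp.single j 1 := by
  ext a
  rw [Finsupp.mapDomain_equiv_apply]
  rw [Equiv.symm_swap]
  rcases eq_or_ne a i with rfl | hi
  · rcases eq_or_ne a j with rfl | hj
    · simp
    · simp [h, hj]
  · rcases eq_or_ne a j with rfl | hj
    · simp [h]
    · simp [Equiv.swap_apply_of_ne_of_ne hi hj, hi, hj]

theorem QA.coeff_swap {g : MvPolynomial σ ℤ} (hg : QA i j g) (n : σ →₀ ℕ) (h : n i = n j) :
    coeff (n - Finsupp.single j 1) g = - coeff (n - Finsupp.single i 1) g := by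
  have := coeff_rename_mapDomain (Equiv.swap i j) (Equiv.injective _) g (n - Finsupp.single i 1)
  rw [mapDomain_swap n h, hg.1, coeff_neg] at this
  linarith

theorem QA.mul_S (hij : i ≠ j) {g : MvPolynomial σ ℤ} (hg : QA i j g) :
    QA i j ((X i + X j) * g) := by
  refine ⟨by simp only [map_mul, map_add, rename_X, hg.1, Equiv.swap_apply_left, Equiv.swap_apply_right]; ring, fun n hn => ?_⟩
  rw [add_mul, coeff_add, coeff_X_mul', coeff_X_mul']
  simp only [Finsupp.mem_support_iff]
  rcases hn.lt_or_eq with h | h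
  · apply add_nonneg
    · split_ifs
      · apply hg.2; simp [hij]; omega
      · rfl
    · split_ifs
      · apply hg.2; simp [hij.symm]; omega
      · rfl
  · rw [hg.coeff_swap n h, h]
    split_ifs <;> simp

theorem QA.mul_P (hij : i ≠ j) {g : MvPolynomial σ ℤ} (hg : QA i j g) :
    QA i j ((X i * X j) * g) := by
  refine ⟨by simp only [map_mul, map_add, rename_X, hg.1, Equiv.swap_apply_left, Equiv.swap_apply_right]; ring, fun n hn => ?_⟩
  rw [mul_assoc, coeff_X_mul', coeff_X_mul']
  split_ifs
  · apply hg.2; simp [hij, hij.symm]; omega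
  · rfl
  · rfl

theorem QA.mul_X {l : σ} (hi : l ≠ i) (hj : l ≠ j) {g : MvPolynomial σ ℤ} (hg : QA i j g) :
    QA i j (X l * g) := by
  refine ⟨by rw [map_mul, hg.1]; simp [Equiv.swap_apply_of_ne_of_ne hi hj], fun n hn => ?_⟩
  rw [coeff_X_mul']
  split_ifs
  · apply hg.2; simpa [hi, hj] using hn
  · rfl

theorem QA.mul_GG (hij : i ≠ j) {r : MvPolynomial σ ℤ} (hr : r ∈ GG i j) :
    ∀ {g : MvPolynomial σ ℤ}, QA i j g → QA i j (r * g) := by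
  unfold GG at hr
  induction hr using Subsemiring.closure_induction with
  | mem x hx =>
    intro g hg
    rcases hx with (rfl | rfl) | ⟨l, hi, hj, rfl⟩
    · exact hg.mul_S hij
    · exact hg.mul_P hij
    · exact hg.mul_X hi hj
  | zero => intro g _; rw [zero_mul]; exact QA.zero
  | one => intro g hg; rwa [one_mul]
  | add x y _ _ hx hy => intro g hg; rw [add_mul]; exact (hx hg).add (hy hg)
  | mul x y _ _ hx hy => intro g hg; rw [mul_assoc]; exact hx (hy hg)

theorem QA.base (k : ℕ) : QA i j (X j ^ k - X i ^ k : MvPolynomial σ ℤ) := by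
  refine ⟨by simp, fun n hn => ?_⟩
  rw [coeff_sub, coeff_X_pow, coeff_X_pow]
  by_cases h : Finsupp.single i k = n
  · subst h
    rcases eq_or_ne i j with rfl | hij
    · simp
    · have : k = 0 := by simpa [hij] using hn
      subst this; simp
  · rw [if_neg h]; split_ifs <;> simp

theorem QA.sum {ι : Type*} (s : Finset ι) (f : ι → MvPolynomial σ ℤ)
    (h : ∀ a ∈ s, QA i j (f a)) : QA i j (∑ a ∈ s, f a) := by
  classical
  induction s using Finset.induction_on with
  | empty => simpa using QA.zero
  | insert a s ha ih =>
    rw [Finset.sum_insert ha]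
    exact (h a (by simp)).add (ih fun b hb => h b (by simp [hb]))

theorem GG.S : (X i + X j : MvPolynomial σ ℤ) ∈ GG i j :=
  Subsemiring.subset_closure (by simp)
theorem GG.P : (X i * X j : MvPolynomial σ ℤ) ∈ GG i j :=
  Subsemiring.subset_closure (by simp)
theorem GG.X {l : σ} (hi : l ≠ i) (hj : l ≠ j) : (X l : MvPolynomial σ ℤ) ∈ GG i j :=
  Subsemiring.subset_closure (Or.inr ⟨l, hi, hj, rfl⟩)

theorem QA.diff_pow (hij : i ≠ j) {u : MvPolynomial σ ℤ} (hu : u ∈ GG i j) (e : ℕ) :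
    QA i j ((u + X j) ^ e - (u + X i) ^ e) := by
  rw [add_pow, add_pow, ← Finset.sum_sub_distrib]
  apply QA.sum
  intro k _
  have : u ^ k * X j ^ (e - k) * (e.choose k : MvPolynomial σ ℤ)
      - u ^ k * X i ^ (e - k) * (e.choose k : MvPolynomial σ ℤ)
      = (u ^ k * (e.choose k : MvPolynomial σ ℤ)) * (X j ^ (e - k) - X i ^ (e - k)) := by ring
  rw [this]
  exact QA.mul_GG hij (mul_mem (pow_mem hu k) (natCast_mem _ _)) (QA.base _)

/-- key extraction: the coefficient at a symmetric exponent of `(X i - X j) * g` -/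
theorem QA.extract {g : MvPolynomial σ ℤ} (hg : QA i j g) (n : σ →₀ ℕ) (h : n i = n j)
    (h0 : n i ≠ 0) :
    coeff n ((X i - X j) * g) = 2 * coeff (n - Finsupp.single i 1) g := by
  rw [sub_mul, coeff_sub, coeff_X_mul', coeff_X_mul', if_pos (by simpa using h0),
    if_pos (by simpa [← h] using h0), hg.coeff_swap n h]
  ring

theorem coeff_symm (n : σ →₀ ℕ) (h : n i = n j) (f : MvPolynomial σ ℤ) :
    coeff n (rename (Equiv.swap i j) f) = coeff n f := by
  have := coeff_rename_mapDomain (Equiv.swap i j) (Equiv.injective _) f n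
  rwa [show Finsupp.mapDomain (Equiv.swap i j) n = n from ?_] at this
  ext a
  rw [Finsupp.mapDomain_equiv_apply]
  simp only [Equiv.symm_swap, Equiv.swap_apply_def]
  split_ifs <;> simp_all

/-- The transfer identity. `R` is the symmetric rest. -/
theorem transfer_eq (hij : i ≠ j) (n : σ →₀ ℕ) (h : n i = n j) (h0 : n i ≠ 0)
    {u R : MvPolynomial σ ℤ} (hu : u ∈ GG i j) (hR : R ∈ GG i j)
    (hus : rename (Equiv.swap i j) u = u) (hRs : rename (Equiv.swap i j) R = R) (c e : ℕ) :
    coeff n ((u + X j) ^ (c + e) * (u + X i) ^ (c + 1) * R)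
      - coeff n ((u + X j) ^ (c + e + 1) * (u + X i) ^ c * R) =
    coeff (n - Finsupp.single i 1)
      (((u * u + u * (X i + X j) + X i * X j) ^ c * R) * ((u + X j) ^ e - (u + X i) ^ e)) := by
  have hT : (u * u + u * (X i + X j) + X i * X j) ∈ GG i j :=
    add_mem (add_mem (mul_mem hu hu) (mul_mem hu GG.S)) GG.P
  have hQ := QA.mul_GG hij (mul_mem (pow_mem hT c) hR) (QA.diff_pow hij hu e)
  have h1 := hQ.extract n h h0
  set d : MvPolynomial σ ℤ := (u + X j) ^ (c + e) * (u + X i) ^ (c + 1) * R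
    - (u + X j) ^ (c + e + 1) * (u + X i) ^ c * R with hd
  have h2 : (X i - X j) * ((u * u + u * (X i + X j) + X i * X j) ^ c * R *
      ((u + X j) ^ e - (u + X i) ^ e)) = d + rename (Equiv.swap i j) d := by
    have : u * u + u * (X i + X j) + X i * X j = (u + X i) * (u + X j) := by ring
    rw [this, hd]
    simp only [map_sub, map_mul, map_pow, map_add, hus, hRs, rename_X, Equiv.swap_apply_left,
      Equiv.swap_apply_right]
    rw [mul_pow]
    ring
  rw [h2, coeff_add, coeff_symm n h, hd, coeff_sub] at h1
  linarith

theorem transfer_nonneg (hij : i ≠ j) (n : σ →₀ ℕ) (h : n i = n j) (h0 : n i ≠ 0)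
    {u R : MvPolynomial σ ℤ} (hu : u ∈ GG i j) (hR : R ∈ GG i j)
    (hus : rename (Equiv.swap i j) u = u) (hRs : rename (Equiv.swap i j) R = R) (c e : ℕ) :
    coeff n ((u + X j) ^ (c + e + 1) * (u + X i) ^ c * R) ≤
      coeff n ((u + X j) ^ (c + e) * (u + X i) ^ (c + 1) * R) := by
  have h1 := transfer_eq hij n h h0 hu hR hus hRs c e
  have hT : (u * u + u * (X i + X j) + X i * X j) ∈ GG i j :=
    add_mem (add_mem (mul_mem hu hu) (mul_mem hu GG.S)) GG.P
  have hQ := QA.mul_GG hij (mul_mem (pow_mem hT c) hR) (QA.diff_pow hij hu e)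
  have := hQ.2 (n - Finsupp.single i 1) (by simp [hij]; omega)
  linarith

/-- `Dom i j A B`: `A` dominates `B`. -/
def Dom (i j : σ) (A B : MvPolynomial σ ℤ) : Prop := A - B ∈ GG i j ∧ B ∈ GG i j

theorem Dom.left {A B : MvPolynomial σ ℤ} (h : Dom i j A B) : A ∈ GG i j := by
  have := add_mem h.1 h.2
  simpa using this

theorem Dom.refl {A : MvPolynomial σ ℤ} (h : A ∈ GG i j) : Dom i j A A :=
  ⟨by simp, h⟩

theorem Dom.mul {A B C D : MvPolynomial σ ℤ} (h : Dom i j A B) (h' : Dom i j C D) :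
    Dom i j (A * C) (B * D) := by
  refine ⟨?_, mul_mem h.2 h'.2⟩
  have : A * C - B * D = A * (C - D) + (A - B) * D := by ring
  rw [this]
  exact add_mem (mul_mem h.left h'.1) (mul_mem h.1 h'.2)

theorem Dom.pow {A B : MvPolynomial σ ℤ} (h : Dom i j A B) (k : ℕ) :
    Dom i j (A ^ k) (B ^ k) := by
  induction k with
  | zero => simpa using Dom.refl (one_mem _)
  | succ k ih => rw [pow_succ, pow_succ]; exact ih.mul h

theorem Dom.prod {ι : Type*} (s : Finset ι) (f g : ι → MvPolynomial σ ℤ)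
    (h : ∀ a ∈ s, Dom i j (f a) (g a)) : Dom i j (∏ a ∈ s, f a) (∏ a ∈ s, g a) := by
  classical
  induction s using Finset.induction_on with
  | empty => simpa using Dom.refl (one_mem _)
  | insert a s ha ih =>
    rw [Finset.prod_insert ha, Finset.prod_insert ha]
    exact (h a (by simp)).mul (ih fun b hb => h b (by simp [hb]))

theorem Dom.trans {A B C : MvPolynomial σ ℤ} (h : Dom i j A B) (h' : Dom i j B C) :
    Dom i j A C := by
  refine ⟨?_, h'.2⟩
  have : A - C = (A - B) + (B - C) := by ring
  rw [this]; exact add_mem h.1 h'.1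

theorem Dom.of_add {A B C : MvPolynomial σ ℤ} (hB : B ∈ GG i j) (hC : C ∈ GG i j)
    (h : A = B + C) : Dom i j A B := ⟨by rw [h]; simpa using hC, hB⟩

theorem dom_TX {u : MvPolynomial σ ℤ} (hu : u ∈ GG i j) (F : ℕ) :
    ∀ (c w : ℕ), w ≤ 2 * c + F → ∃ r t, w + t + 2 * r = 2 * c + F ∧
      Dom i j ((u * u + u * (X i + X j) + X i * X j) ^ c * (u + (X i + X j)) ^ F)
        (u ^ w * (X i + X j) ^ t * (X i * X j) ^ r) := by
  have hS : (X i + X j : MvPolynomial σ ℤ) ∈ GG i j := GG.S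
  have hP : (X i * X j : MvPolynomial σ ℤ) ∈ GG i j := GG.P
  intro c
  induction c with
  | zero =>
    intro w hw
    refine ⟨0, F - w, by omega, ?_⟩
    have h1 : Dom i j (u + (X i + X j)) u := Dom.of_add hu hS rfl
    have h2 : Dom i j (u + (X i + X j)) (X i + X j) := Dom.of_add hS hu (add_comm _ _)
    have := (h1.pow w).mul (h2.pow (F - w))
    rw [← pow_add, show w + (F - w) = F by omega] at this
    simpa using this
  | succ c ih =>
    intro w hw
    rcases Nat.lt_or_ge (2 * c + F) w with h | h
    · obtain ⟨r, t, h1, h2⟩ := ih (2 * c + F) le_rfl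
      rcases Nat.lt_or_ge (2 * c + F + 1) w with h' | h'
      · refine ⟨r, t, by omega, ?_⟩
        have h3 : Dom i j (u * u + u * (X i + X j) + X i * X j) (u * u) :=
          Dom.of_add (mul_mem hu hu) (add_mem (mul_mem hu hS) hP) (by ring)
        convert h3.mul h2 using 1
        · ring
        · rw [show w = 2 * c + F + 2 by omega]; ring
      · refine ⟨r, t + 1, by omega, ?_⟩
        have h3 : Dom i j (u * u + u * (X i + X j) + X i * X j) (u * (X i + X j)) :=
          Dom.of_add (mul_mem hu hS) (add_mem (mul_mem hu hu) hP) (by ring)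
        convert h3.mul h2 using 1
        · ring
        · rw [show w = 2 * c + F + 1 by omega]; ring
    · obtain ⟨r, t, h1, h2⟩ := ih w h
      refine ⟨r + 1, t, by omega, ?_⟩
      have h3 : Dom i j (u * u + u * (X i + X j) + X i * X j) (X i * X j) :=
        Dom.of_add hP (add_mem (mul_mem hu hu) (mul_mem hu hS)) (by ring)
      convert h3.mul h2 using 1 <;> ring

theorem ballot (hij : i ≠ j) : ∀ (t : ℕ) (n : σ →₀ ℕ), n i < n j → n i + n j = t + 1 →
    (∀ l, l ≠ i → l ≠ j → n l = 0) →
    0 < coeff n ((X i + X j) ^ t * (X j - X i) : MvPolynomial σ ℤ) := by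
  intro t
  induction t with
  | zero =>
    intro n h1 h2 h3
    have hn : n = Finsupp.single j 1 := by
      ext a
      rw [Finsupp.single_apply]
      split_ifs with h
      · subst h; omega
      · rcases eq_or_ne a i with rfl | h'
        · omega
        · exact h3 a h' (Ne.symm h)
    subst hn
    have : Finsupp.single i 1 ≠ Finsupp.single j 1 := by
      intro h; exact hij (Finsupp.single_left_injective one_ne_zero h)
    simp [coeff_X, this]
  | succ t ih =>
    intro n h1 h2 h3
    have hQ : QA i j ((X i + X j) ^ t * (X j - X i) : MvPolynomial σ ℤ) := by
      have := QA.mul_GG hij (pow_mem (GG.S (i := i) (j := j)) t) (QA.base 1)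
      simpa using this
    rw [pow_succ', mul_assoc, add_mul, coeff_add, coeff_X_mul', coeff_X_mul']
    have hj : j ∈ n.support := by simp; omega
    rw [if_pos hj]
    have hnn : 0 ≤ coeff (n - Finsupp.single j 1) ((X i + X j) ^ t * (X j - X i) : MvPolynomial σ ℤ) :=
      hQ.2 _ (by simp [hij.symm]; omega)
    by_cases hi : n i = 0
    · rw [if_neg (by simpa using hi), zero_add]
      apply ih
      · simp [hij.symm]; omega
      · simp [hij.symm]; omega
      · intro l hl hl'; simp [h3 l hl hl']
    · rw [if_pos (by simpa using hi)]
      have : 0 < coeff (n - Finsupp.single i 1) ((X i + X j) ^ t * (X j - X i) : MvPolynomial σ ℤ) := by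
        apply ih
        · simp [hij]; omega
        · simp [hij]; omega
        · intro l hl hl'; simp [h3 l hl hl']
      linarith

theorem witness_pos [Fintype σ] (hij : i ≠ j) (s r t : ℕ) (h : t + 2 * r + 2 = 2 * s)
    (n : σ →₀ ℕ) (hn : ∀ l, n l = s) :
    0 < coeff (n - Finsupp.single i 1)
      (((∏ l ∈ (Finset.univ.erase i).erase j, X l ^ s) * (X i + X j) ^ t * (X i * X j) ^ r)
        * (X j - X i) : MvPolynomial σ ℤ) := by
  set μ : σ →₀ ℕ := Finsupp.equivFunOnFinite.symm (fun l => if l = i ∨ l = j then r else s) with hμ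
  set ν : σ →₀ ℕ := Finsupp.equivFunOnFinite.symm
    (fun l => if l = i then s - 1 - r else if l = j then s - r else 0) with hν
  have h1 : n - Finsupp.single i 1 = μ + ν := by
    ext a
    simp only [Finsupp.tsub_apply, hn, Finsupp.single_apply, Finsupp.add_apply, hμ, hν,
      Finsupp.equivFunOnFinite_symm_apply_apply]
    rcases eq_or_ne a i with rfl | hi
    · simp; omega
    · rcases eq_or_ne a j with rfl | hj
      · simp [hij.symm, hij]; omega
      · simp [hi, hj, hi.symm]
  have h2 : (monomial μ (1 : ℤ)) =
      (∏ l ∈ (Finset.univ.erase i).erase j, X l ^ s) * (X i * X j) ^ r := by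
    rw [monomial_eq, Finsupp.prod_fintype _ _ (by simp)]
    rw [← Finset.mul_prod_erase Finset.univ _ (Finset.mem_univ i),
      ← Finset.mul_prod_erase (Finset.univ.erase i) _ (a := j) (by simp [hij.symm])]
    have : ∀ l ∈ (Finset.univ.erase i).erase j, (X l : MvPolynomial σ ℤ) ^ μ l = X l ^ s := by
      intro l hl
      simp at hl
      simp [hμ, hl]
    rw [Finset.prod_congr rfl this]
    simp [hμ]
    ring
  have h3 : (((∏ l ∈ (Finset.univ.erase i).erase j, X l ^ s) * (X i + X j) ^ t * (X i * X j) ^ r)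
        * (X j - X i) : MvPolynomial σ ℤ) = monomial μ 1 * ((X i + X j) ^ t * (X j - X i)) := by
    rw [h2]; ring
  rw [h3, h1, coeff_monomial_mul, one_mul]
  apply ballot hij
  · simp [hν, hij.symm]; omega
  · simp [hν, hij.symm]; omega
  · intro l hi hj; simp [hν, hi, hj]

end poly

section main
open MvPolynomial

variable {σ : Type*} [DecidableEq σ] [Fintype σ]

noncomputable def n0 (σ : Type*) [Fintype σ] (s : ℕ) : σ →₀ ℕ :=
  Finsupp.equivFunOnFinite.symm (fun _ => s)

@[simp] theorem n0_apply (s : ℕ) (l : σ) : n0 σ s l = s := by simp [n0]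

noncomputable def Fb (s F : ℕ) (b : σ → ℕ) : ℤ :=
  coeff (n0 σ s) ((∏ k, ((∑ l, X l) - X k) ^ b k) * (∑ l, X l) ^ F : MvPolynomial σ ℤ)

noncomputable def uu (i j : σ) : MvPolynomial σ ℤ := ∑ l ∈ (Finset.univ.erase i).erase j, X l

noncomputable def RR (i j : σ) (F : ℕ) (b : σ → ℕ) : MvPolynomial σ ℤ :=
  (∏ l ∈ (Finset.univ.erase i).erase j, (uu i j + (X i + X j) - X l) ^ b l) *
    (uu i j + (X i + X j)) ^ F

theorem tot_eq {i j : σ} (hij : i ≠ j) :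
    (∑ l, X l : MvPolynomial σ ℤ) = uu i j + (X i + X j) := by
  rw [uu, ← Finset.add_sum_erase Finset.univ _ (Finset.mem_univ i),
      ← Finset.add_sum_erase (Finset.univ.erase i) _ (a := j) (by simp [hij.symm])]
  ring

theorem Fb_eq {i j : σ} (hij : i ≠ j) (s F : ℕ) (b : σ → ℕ) :
    Fb s F b = coeff (n0 σ s) ((uu i j + X j) ^ b i * (uu i j + X i) ^ b j * RR i j F b) := by
  rw [Fb, tot_eq hij, RR, ← Finset.mul_prod_erase Finset.univ _ (Finset.mem_univ i),
      ← Finset.mul_prod_erase (Finset.univ.erase i) _ (a := j) (by simp [hij.symm])]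
  congr 1
  rw [show uu i j + (X i + X j) - X i = uu i j + X j by ring,
    show uu i j + (X i + X j) - X j = uu i j + X i by ring]
  ring

theorem uu_mem (i j : σ) : uu i j ∈ GG i j := by
  refine sum_mem fun l hl => ?_
  simp at hl
  exact GG.X hl.2 hl.1

theorem sub_eq {i j l : σ} (hl : l ∈ (Finset.univ.erase i).erase j) :
    uu i j + (X i + X j) - X l =
      (∑ l' ∈ ((Finset.univ.erase i).erase j).erase l, X l') + (X i + X j) := by
  rw [uu, ← Finset.add_sum_erase _ _ hl]
  ring

theorem part_mem (i j l : σ) :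
    (∑ l' ∈ ((Finset.univ.erase i).erase j).erase l, X l' : MvPolynomial σ ℤ) ∈ GG i j := by
  refine sum_mem fun l hl => ?_
  simp at hl
  exact GG.X hl.2.2 hl.2.1

theorem RR_mem (i j : σ) (F : ℕ) (b : σ → ℕ) : RR i j F b ∈ GG i j := by
  refine mul_mem (prod_mem fun l hl => pow_mem ?_ _) (pow_mem (add_mem (uu_mem i j) GG.S) _)
  rw [sub_eq hl]
  exact add_mem (part_mem i j l) GG.S

theorem uu_swap (i j : σ) : rename (Equiv.swap i j) (uu i j) = uu i j := by
  rw [uu, map_sum]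
  refine Finset.sum_congr rfl fun l hl => ?_
  simp at hl
  rw [rename_X, Equiv.swap_apply_of_ne_of_ne hl.2 hl.1]

theorem RR_swap (i j : σ) (F : ℕ) (b : σ → ℕ) :
    rename (Equiv.swap i j) (RR i j F b) = RR i j F b := by
  have h : rename (Equiv.swap i j) (uu i j + (X i + X j)) = uu i j + (X i + X j) := by
    simp only [map_add, uu_swap, rename_X, Equiv.swap_apply_left, Equiv.swap_apply_right]
    ring
  rw [RR, map_mul, map_pow, h, map_prod]
  congr 1
  refine Finset.prod_congr rfl fun l hl => ?_
  simp at hl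
  rw [map_pow, map_sub, h, rename_X, Equiv.swap_apply_of_ne_of_ne hl.2 hl.1]

theorem RR_congr {i j : σ} {F : ℕ} {b b' : σ → ℕ} (h : ∀ l, l ≠ i → l ≠ j → b' l = b l) :
    RR i j F b' = RR i j F b := by
  rw [RR, RR]
  congr 1
  refine Finset.prod_congr rfl fun l hl => ?_
  simp at hl
  rw [h l hl.2 hl.1]

theorem Fb_weak {i j : σ} (hij : i ≠ j) {s : ℕ} (hs : 1 ≤ s) (F : ℕ) {b b' : σ → ℕ}
    (hi : b' i + 1 = b i) (hj : b' j = b j + 1) (hle : b j ≤ b' i)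
    (h : ∀ l, l ≠ i → l ≠ j → b' l = b l) : Fb s F b ≤ Fb s F b' := by
  obtain ⟨e, he⟩ := Nat.exists_eq_add_of_le hle
  have := transfer_nonneg hij (n0 σ s) (by simp) (by simp; omega) (uu_mem i j) (RR_mem i j F b)
    (uu_swap i j) (RR_swap i j F b) (b j) e
  rw [Fb_eq hij, Fb_eq hij, RR_congr h, ← hi, hj, he]
  exact this

theorem Fb_strict_aux {i j : σ} (hij : i ≠ j) {s : ℕ} (hs : 1 ≤ s) (F : ℕ) {b b' : σ → ℕ}
    (hi : b' i + 1 = b i) (hj : b' j = b j + 1) {e : ℕ} (hle : b' i = b j + e)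
    (he : e = 1 ∨ e = 2)
    (h : ∀ l, l ≠ i → l ≠ j → b' l = b l) {w t0 : ℕ} {q : MvPolynomial σ ℤ}
    (hw : w ≤ 2 * b j + (F + (e - 1)))
    (hwt : 2 * b j + (F + (e - 1)) - w + t0 + 2 = 2 * s)
    (hdom : Dom i j (∏ l ∈ (Finset.univ.erase i).erase j, (uu i j + (X i + X j) - X l) ^ b l)
      (q * (X i + X j) ^ t0))
    (hdom2 : Dom i j (uu i j ^ w * q) (∏ l ∈ (Finset.univ.erase i).erase j, X l ^ s)) :
    Fb s F b < Fb s F b' := by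
  have h1 := transfer_eq hij (n0 σ s) (by simp) (by simp; omega) (uu_mem i j) (RR_mem i j F b)
    (uu_swap i j) (RR_swap i j F b) (b j) e
  rw [Fb_eq hij, Fb_eq hij, RR_congr h, ← hi, hj, hle]
  rw [← sub_pos, h1]
  obtain ⟨r, t, h2, h3⟩ := dom_TX (uu_mem i j) (F + (e - 1)) (b j) w hw
  have hS : (X i + X j : MvPolynomial σ ℤ) ∈ GG i j := GG.S
  have hP : (X i * X j : MvPolynomial σ ℤ) ∈ GG i j := GG.P
  have h4 : ∃ A, Dom i j A ((uu i j + (X i + X j)) ^ (e - 1)) ∧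
      (uu i j + X j) ^ e - (uu i j + X i) ^ e = A * (X j - X i) := by
    rcases he with rfl | rfl
    · exact ⟨1, by simpa using Dom.refl (one_mem _), by ring⟩
    · exact ⟨uu i j + (X i + X j) + uu i j, by
        simpa using Dom.of_add (add_mem (uu_mem i j) GG.S) (uu_mem i j) rfl, by ring⟩
  obtain ⟨A, hA, hA'⟩ := h4
  rw [hA']
  set T := (uu i j * uu i j + uu i j * (X i + X j) + X i * X j) ^ b j with hT
  have hTm : T ∈ GG i j := pow_mem (add_mem (add_mem (mul_mem (uu_mem i j) (uu_mem i j))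
    (mul_mem (uu_mem i j) GG.S)) GG.P) _
  have h5 : Dom i j (T * RR i j F b * A)
      ((∏ l ∈ (Finset.univ.erase i).erase j, X l ^ s) * (X i + X j) ^ (t + t0)
        * (X i * X j) ^ r) := by
    have a1 := ((Dom.refl hTm).mul (hdom.mul (Dom.refl
      (pow_mem (add_mem (uu_mem i j) GG.S) F)))).mul hA
    have a2 := h3.mul (Dom.refl hdom.2)
    have a3 := hdom2.mul (Dom.refl (mul_mem (pow_mem hS (t + t0)) (pow_mem hP r)))
    have e2 : uu i j ^ w * (X i + X j) ^ t * (X i * X j) ^ r * (q * (X i + X j) ^ t0) =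
      uu i j ^ w * q * ((X i + X j) ^ (t + t0) * (X i * X j) ^ r) := by rw [pow_add]; ring
    rw [e2] at a2
    have e1 : T * (q * (X i + X j) ^ t0 * (uu i j + (X i + X j)) ^ F) *
        (uu i j + (X i + X j)) ^ (e - 1) =
        T * (uu i j + (X i + X j)) ^ (F + (e - 1)) * (q * (X i + X j) ^ t0) := by
      rw [pow_add]; ring
    rw [e1] at a1
    rw [RR]
    have := (a1.trans a2).trans a3
    rwa [← mul_assoc (∏ l ∈ (Finset.univ.erase i).erase j, X l ^ s)] at this
  have h6 := (QA.mul_GG hij h5.1 (QA.base 1)).2 (n0 σ s - Finsupp.single i 1)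
    (by simp [hij])
  have h7 := witness_pos hij s r (t + t0) (by omega) (n0 σ s) (by simp)
  rw [pow_one, pow_one, sub_mul, coeff_sub] at h6
  rw [← mul_assoc]
  linarith

theorem Fb_strict {i j : σ} (hij : i ≠ j) {s : ℕ} (hs : 1 ≤ s) (F : ℕ) {b b' : σ → ℕ}
    (hi : b' i + 1 = b i) (hj : b' j = b j + 1) {e : ℕ} (hle : b' i = b j + e)
    (he : e = 1 ∨ e = 2)
    (h : ∀ l, l ≠ i → l ≠ j → b' l = b l) (hc : 3 ≤ Fintype.card σ)
    (hbs : ∀ l, l ≠ i → l ≠ j → b l ≤ s)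
    (hb3 : Fintype.card σ = 3 → ∀ l, l ≠ i → l ≠ j → b l + 2 ≤ 2 * s)
    (hsum : ∑ l, b l + F = s * Fintype.card σ) :
    Fb s F b < Fb s F b' := by
  set O := (Finset.univ.erase i).erase j with hO
  have hOc : O.card + 2 = Fintype.card σ := by
    rw [hO, Finset.card_erase_of_mem (by simp [hij.symm]), Finset.card_erase_of_mem (by simp),
      Finset.card_univ]; omega
  have hsum' : ∑ l, b l = b i + (b j + ∑ l ∈ O, b l) := by
    rw [hO, ← Finset.add_sum_erase Finset.univ _ (Finset.mem_univ i),
      ← Finset.add_sum_erase (Finset.univ.erase i) _ (a := j) (by simp [hij.symm])]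
  rw [hsum', ← hOc] at hsum
  have hmemO : ∀ l, l ∈ O ↔ l ≠ i ∧ l ≠ j := by intro l; simp [hO, and_comm]
  rcases eq_or_ne O.card 1 with h1 | h1
  · obtain ⟨k, hk⟩ := Finset.card_eq_one.1 h1
    have hkO : k ∈ O := by simp [hk]
    have hk' := (hmemO k).1 hkO
    have hb := hb3 (by omega) k hk'.1 hk'.2
    rw [hk, Finset.sum_singleton] at hsum
    have hu : uu i j = X k := by rw [uu, ← hO, hk, Finset.sum_singleton]
    refine Fb_strict_aux hij hs F hi hj hle he h (w := s) (t0 := b k) (q := 1) ?_ ?_ ?_ ?_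
    · simp at hsum; omega
    · simp at hsum; omega
    · rw [← hO, hk, Finset.prod_singleton, hu, one_mul, add_sub_cancel_left]
      exact Dom.refl (pow_mem GG.S _)
    · rw [← hO, hk, Finset.prod_singleton, hu, mul_one]
      exact Dom.refl (pow_mem (GG.X hk'.1 hk'.2) _)
  · obtain ⟨f, hf, hf'⟩ := O.exists_cycleOn
    have hnt : (O : Set σ).Nontrivial := by
      rw [Finset.nontrivial_coe, ← Finset.one_lt_card_iff_nontrivial]; omega
    have hfm : ∀ l ∈ O, f l ∈ O := fun l hl => hf.1.mapsTo hl
    have hs2 : ∑ l ∈ O, (s - b l) + ∑ l ∈ O, b l = s * O.card := by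
      rw [← Finset.sum_add_distrib]
      rw [Finset.sum_congr rfl (g := fun _ => s)]
      · simp [mul_comm]
      · intro l hl
        have := hbs l ((hmemO l).1 hl).1 ((hmemO l).1 hl).2
        omega
    refine Fb_strict_aux hij hs F hi hj hle he h (w := ∑ l ∈ O, (s - b l)) (t0 := 0)
      (q := ∏ l ∈ O, X (f l) ^ b l) ?_ ?_ ?_ ?_
    · rw [mul_add] at hsum; omega
    · rw [mul_add] at hsum; omega
    · rw [pow_zero, mul_one]
      apply Dom.prod
      intro l hl
      apply Dom.pow
      have hfl := hf.apply_ne hnt hl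
      have hm : f l ∈ O.erase l := by simp [hfl, hfm l hl]
      rw [sub_eq hl, ← hO, ← Finset.add_sum_erase _ _ hm, add_assoc]
      have h2 := (hmemO (f l)).1 (hfm l hl)
      refine Dom.of_add (GG.X h2.1 h2.2) (add_mem (sum_mem fun l' hl' => ?_) GG.S) rfl
      have h3 := (hmemO l').1 (Finset.mem_of_mem_erase (Finset.mem_of_mem_erase hl'))
      exact GG.X h3.1 h3.2
    · have e1 : ∏ l ∈ O, (X l : MvPolynomial σ ℤ) ^ s
          = (∏ l ∈ O, X (f l) ^ (s - b l)) * ∏ l ∈ O, X (f l) ^ b l := by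
        rw [← Finset.prod_mul_distrib]
        symm
        refine Finset.prod_bij (fun l _ => f l) hfm (fun _ _ _ _ h => f.injective h) ?_ ?_
        · intro l hl
          obtain ⟨l', hl', h⟩ := hf.1.surjOn hl
          exact ⟨l', hl', h⟩
        · intro l hl
          rw [← pow_add]
          have := hbs l ((hmemO l).1 hl).1 ((hmemO l).1 hl).2
          congr 1; omega
      rw [← hO, e1]
      refine Dom.mul ?_ (Dom.refl (prod_mem fun l hl => pow_mem ?_ _))
      · rw [← Finset.prod_pow_eq_pow_sum]
        apply Dom.prod
        intro l hl
        apply Dom.pow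
        have h2 := (hmemO (f l)).1 (hfm l hl)
        rw [uu, ← hO, ← Finset.add_sum_erase _ _ (hfm l hl)]
        refine Dom.of_add (GG.X h2.1 h2.2) (sum_mem fun l' hl' => ?_) rfl
        have h3 := (hmemO l').1 (Finset.mem_of_mem_erase hl')
        exact GG.X h3.1 h3.2
      · have h2 := (hmemO (f l)).1 (hfm l hl)
        exact GG.X h2.1 h2.2

theorem Fb_perm (s F : ℕ) (b : σ → ℕ) (τ : Equiv.Perm σ) : Fb s F (b ∘ τ) = Fb s F b := by
  have h := coeff_rename_mapDomain τ (Equiv.injective _)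
    ((∏ k, ((∑ l, X l) - X k) ^ (b ∘ τ) k) * (∑ l, X l) ^ F : MvPolynomial σ ℤ) (n0 σ s)
  have h1 : Finsupp.mapDomain τ (n0 σ s) = n0 σ s := by
    ext a; rw [Finsupp.mapDomain_equiv_apply]; simp
  rw [h1] at h
  rw [Fb, Fb, ← h]
  congr 1
  have h2 : rename τ (∑ l, X l : MvPolynomial σ ℤ) = ∑ l, X l := by
    rw [map_sum]
    simp only [rename_X]
    exact Equiv.sum_comp τ (fun l => (X l : MvPolynomial σ ℤ))
  rw [map_mul, map_pow, h2, map_prod]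
  congr 1
  simp only [map_pow, map_sub, h2, rename_X, Function.comp]
  exact Equiv.prod_comp τ (fun k => ((∑ l, X l : MvPolynomial σ ℤ) - X k) ^ b k)

/-- almost regular -/
def AR (q : ℕ) (b : σ → ℕ) : Prop := ∀ k, b k = q ∨ b k = q + 1

theorem AR_perm {q : ℕ} {b b' : σ → ℕ} (h : AR q b) (h' : AR q b') (hs : ∑ k, b k = ∑ k, b' k) :
    ∃ τ : Equiv.Perm σ, b = b' ∘ τ := by
  have key : ∀ {b : σ → ℕ}, AR q b → ∑ k, b k = q * Fintype.card σ +
      (Finset.univ.filter fun k => b k = q + 1).card := by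
    intro b h
    rw [Finset.card_filter, show q * Fintype.card σ = ∑ _k : σ, q by simp [mul_comm],
      ← Finset.sum_add_distrib]
    refine Finset.sum_congr rfl fun k _ => ?_
    rcases h k with h | h <;> simp [h]
  rw [key h, key h'] at hs
  have hc : (Finset.univ.filter fun k => b k = q + 1).card =
    (Finset.univ.filter fun k => b' k = q + 1).card := by omega
  have hq : ∀ {b : σ → ℕ}, AR q b → ∀ c, c ≠ q + 1 → c ≠ q → IsEmpty {k // b k = c} := by
    intro b h c h1 h2
    refine ⟨fun ⟨k, hk⟩ => ?_⟩
    rcases h k with h | h <;> omega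
  have hq' : ∀ {b : σ → ℕ}, AR q b → Fintype.card {k // b k = q} +
      (Finset.univ.filter fun k => b k = q + 1).card = Fintype.card σ := by
    intro b h
    rw [Fintype.card_subtype, ← Finset.card_union_of_disjoint, ← Finset.card_univ]
    · congr 1
      ext k
      simpa using h k
    · rw [Finset.disjoint_filter]; intro k _ h; omega
  have hcard : ∀ c, Fintype.card {k // b k = c} = Fintype.card {k // b' k = c} := by
    intro c
    rcases eq_or_ne c (q + 1) with rfl | h1
    · rwa [Fintype.card_subtype, Fintype.card_subtype]
    · rcases eq_or_ne c q with rfl | h2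
      · have := hq' h; have := hq' h'; omega
      · have := hq h c h1 h2
        have := hq h' c h1 h2
        simp
  refine ⟨Equiv.ofFiberEquiv (f := b) (g := b') fun c => Fintype.equivOfCardEq (hcard c), ?_⟩
  ext k
  exact (Equiv.ofFiberEquiv_map _ k).symm

theorem exists_AR {s m F : ℕ} (hs : 1 ≤ s) (hv : 3 ≤ Fintype.card σ)
    (hF : m + F = s * Fintype.card σ) (hexc : ¬(Fintype.card σ = 3 ∧ s = 1 ∧ m = 3)) :
    ∀ (N : ℕ) (b : σ → ℕ), ∑ k, b k * b k ≤ N → ∑ k, b k = m →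
      ¬ AR (m / Fintype.card σ) b →
      ∃ b' : σ → ℕ, ∑ k, b' k = m ∧ AR (m / Fintype.card σ) b' ∧ Fb s F b < Fb s F b' := by
  set v := Fintype.card σ with hvdef
  set q := m / v with hq
  have hq1 : q * v ≤ m := Nat.div_mul_le_self m v
  have hq2 : m < (q + 1) * v := by
    exact (Nat.div_lt_iff_lt_mul (by omega)).1 (Nat.lt_succ_self _)
  intro N
  induction N using Nat.strong_induction_on with
  | _ N ih =>
  intro b hbN hbm hnar
  -- a pair with difference at least two
  have hpair : ∃ i j, b j + 2 ≤ b i := by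
    by_contra hcon
    push Not at hcon
    apply hnar
    intro k
    by_contra hk
    rcases Nat.lt_or_ge (b k) q with h1 | h1
    · have : ∑ l, b l < ∑ _l : σ, q :=
        Finset.sum_lt_sum (fun l _ => by have := hcon l k; omega) ⟨k, Finset.mem_univ _, h1⟩
      simp [← hvdef] at this
      rw [mul_comm] at this
      omega
    · have : ∑ _l : σ, (q + 1) ≤ ∑ l, b l :=
        Finset.sum_le_sum (fun l _ => by have := hcon k l; omega)
      simp [← hvdef] at this
      rw [mul_comm] at this
      omega
  obtain ⟨i, j, hd⟩ := hpair
  have hij : i ≠ j := by rintro rfl; omega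
  set b' : σ → ℕ := fun l => if l = i then b i - 1 else if l = j then b j + 1 else b l with hb'
  have hi : b' i + 1 = b i := by simp [hb']; omega
  have hj : b' j = b j + 1 := by simp [hb', hij.symm]
  have hl : ∀ l, l ≠ i → l ≠ j → b' l = b l := by
    intro l h1 h2; simp [hb', h1, h2]
  have split : ∀ g : σ → ℕ, ∑ l, g l = g i + (g j + ∑ l ∈ (Finset.univ.erase i).erase j, g l) := by
    intro g
    rw [← Finset.add_sum_erase Finset.univ _ (Finset.mem_univ i),
      ← Finset.add_sum_erase (Finset.univ.erase i) _ (a := j) (by simp [hij.symm])]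
  have hrest : ∀ h : ℕ → ℕ, ∑ l ∈ (Finset.univ.erase i).erase j, h (b' l) =
      ∑ l ∈ (Finset.univ.erase i).erase j, h (b l) := by
    intro h
    refine Finset.sum_congr rfl fun l hl' => ?_
    simp at hl'
    rw [hl l hl'.2 hl'.1]
  have hb'm : ∑ k, b' k = m := by
    have h1 := hrest id
    simp only [id] at h1
    rw [split] at hbm ⊢
    omega
  have hb'N : ∑ k, b' k * b' k < ∑ k, b k * b k := by
    have h1 := hrest (fun x => x * x)
    rw [split, split (fun k => b k * b k), h1, hj, ← hi]
    have : b j + 1 ≤ b' i := by omega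
    nlinarith
  have hweak : Fb s F b ≤ Fb s F b' := Fb_weak hij hs F hi hj (by omega) hl
  by_cases har : AR q b'
  · refine ⟨b', hb'm, har, ?_⟩
    have a1 := har i
    have a2 := har j
    have hle : ∀ l, b' l ≤ s := by
      intro l
      by_contra hcon
      have hqs : s ≤ q := by rcases har l with h | h <;> omega
      have : ∑ _l : σ, s < ∑ l, b' l :=
        Finset.sum_lt_sum (fun l _ => by rcases har l with h | h <;> omega)
          ⟨l, Finset.mem_univ _, by omega⟩
      simp [← hvdef] at this
      rw [mul_comm] at this
      omega
    refine Fb_strict hij hs F hi hj (e := b' i - b j) (by omega) (by omega) hl hv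
      (fun l h1 h2 => by rw [← hl l h1 h2]; exact hle l) ?_ (by rw [hbm]; exact hF)
    intro h3 l h1 h2
    have h4 := hle l
    rw [hl l h1 h2] at h4
    rcases Nat.lt_or_ge 1 s with h5 | h5
    · omega
    · have h6 : s = 1 := by omega
      have h7 : b l ≤ ∑ l ∈ (Finset.univ.erase i).erase j, b l :=
        Finset.single_le_sum (f := b) (fun _ _ => Nat.zero_le _) (by simp [h1, h2])
      rw [split] at hbm
      rw [← hvdef] at h3
      rw [h3, h6] at hF
      have : m ≠ 3 := fun h => hexc ⟨h3, h6, h⟩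
      omega
  · obtain ⟨b'', h1, h2, h3⟩ := ih (∑ k, b' k * b' k) (by omega) b' le_rfl hb'm har
    exact ⟨b'', h1, h2, lt_of_le_of_lt hweak h3⟩

theorem main_iff {s m F : ℕ} (hs : 1 ≤ s) (hv : 3 ≤ Fintype.card σ)
    (hF : m + F = s * Fintype.card σ) (hexc : ¬(Fintype.card σ = 3 ∧ s = 1 ∧ m = 3))
    (b : σ → ℕ) (hb : ∑ k, b k = m) :
    (∀ b' : σ → ℕ, ∑ k, b' k = m → Fb s F b' ≤ Fb s F b) ↔ AR (m / Fintype.card σ) b := by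
  constructor
  · intro h
    by_contra hcon
    obtain ⟨b', h1, _, h3⟩ := exists_AR hs hv hF hexc _ b le_rfl hb hcon
    exact absurd (h b' h1) (not_le.2 h3)
  · intro h b' hb'
    have key : ∀ b'' : σ → ℕ, ∑ k, b'' k = m → AR (m / Fintype.card σ) b'' →
        Fb s F b'' = Fb s F b := by
      intro b'' h1 h2
      obtain ⟨τ, hτ⟩ := AR_perm h2 h (by rw [h1, hb])
      rw [hτ, Fb_perm]
    by_cases har : AR (m / Fintype.card σ) b'
    · exact (key b' hb' har).le
    · obtain ⟨b'', h1, h2, h3⟩ := exists_AR hs hv hF hexc _ b' le_rfl hb' har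
      rw [← key b'' h1 h2]
      exact h3.le

end main

section bridge

theorem winsAux_iff_s16 (B : List ℕ) : ∀ (d hist : List ℕ) (m : ℕ),
    winsAux (fun h => B.getD h.length 0) hist m d = true ↔
      ∀ p (hp : p < d.length), p < m → B.getD (hist.length + p) 0 ≠ d[p] := by
  intro d
  induction d with
  | nil => intro hist m; cases m <;> simp [winsAux]
  | cons c rest ih =>
    intro hist m
    cases m with
    | zero => simp [winsAux]
    | succ m =>
      rw [winsAux, Bool.and_eq_true, ih]
      constructor
      · rintro ⟨h1, h2⟩ p hp hpm
        cases p with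
        | zero => simpa using h1
        | succ p =>
          have := h2 p (by simpa using hp) (by omega)
          rw [List.getElem_cons_succ]
          rw [List.length_append, List.length_singleton] at this
          rwa [show hist.length + (p + 1) = hist.length + 1 + p by omega]
      · intro h
        refine ⟨?_, fun p hp hpm => ?_⟩
        · have h0 := h 0 (by simp) (by omega)
          rw [List.getElem_cons_zero] at h0
          simpa using h0
        have := h (p + 1) (by simpa using hp) (by omega)
        rw [List.getElem_cons_succ] at this
        rw [List.length_append, List.length_singleton]
        rwa [show hist.length + 1 + p = hist.length + (p + 1) by omega]

def deckOf {v : ℕ} (c : Fin v → ℕ) : List (Fin v) :=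
  (List.finRange v).flatMap fun k => List.replicate (c k) k

theorem deckList_eq {v : ℕ} (b : List ℕ) (hb : b.length = v) :
    deckList b = (deckOf (fun k : Fin v => b.getD k 0)).map (fun k => k.val + 1) := by
  subst hb
  rw [deckList, deckOf, ← List.map_coe_finRange_eq_range, List.flatMap_map, List.map_flatMap]
  simp

theorem deckOf_length {v : ℕ} (c : Fin v → ℕ) : (deckOf c).length = ∑ k, c k := by
  rw [deckOf, List.length_flatMap, Fin.sum_univ_def]
  simp

theorem deckOf_prod {v : ℕ} (c : Fin v → ℕ) {M : Type*} [CommMonoid M] (h : Fin v → M) :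
    ((deckOf c).map h).prod = ∏ k, h k ^ c k := by
  rw [deckOf, List.map_flatMap, List.flatMap_def, List.prod_flatten, Fin.prod_univ_def]
  simp [Function.comp_def]

theorem deckOf_count {v : ℕ} (c : Fin v → ℕ) (k : Fin v) : (deckOf c).count k = c k := by
  rw [deckOf, List.count_flatMap]
  have := Fin.sum_univ_def (fun l => if l = k then c l else 0)
  rw [Finset.sum_ite_eq' Finset.univ k c, if_pos (Finset.mem_univ _)] at this
  rw [this]
  congr 1
  apply List.map_congr_left
  intro l _
  simp [List.count_replicate]

theorem card_get {α : Type*} [DecidableEq α] (D : List α) (k : α) :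
    (Finset.univ.filter fun p : Fin D.length => D.get p = k).card = D.count k := by
  conv_rhs => rw [← List.map_get_finRange D, List.count, List.countP_map]
  rw [List.countP_eq_length_filter, Finset.card]
  rw [Finset.filter_val]
  change Multiset.card (Multiset.filter _ (↑(List.finRange D.length) : Multiset (Fin D.length))) = _
  rw [Multiset.filter_coe, Multiset.coe_card]
  congr 1

theorem countP_perm {α : Type*} {N : ℕ} (f : Fin N → α) (P : List α → Bool) :
    ((List.finRange N).map f).permutations.countP P =
      (Finset.univ.filter fun τ : Equiv.Perm (Fin N) =>
        P ((List.finRange N).map (f ∘ τ)) = true).card := by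
  rw [← List.map_permutations, List.countP_map, List.countP_eq_length_filter,
    ← List.toFinset_card_of_nodup ((List.nodup_permutations _ (List.nodup_finRange N)).filter _)]
  symm
  refine Finset.card_bij (fun τ _ => (List.finRange N).map τ) ?_ ?_ ?_
  · intro τ hτ
    simp only [Finset.mem_filter, Finset.mem_univ, true_and] at hτ
    simp only [List.mem_toFinset, List.mem_filter, List.mem_permutations, Function.comp,
      List.map_map]
    refine ⟨?_, hτ⟩
    exact Equiv.Perm.map_finRange_perm τ
  · intro τ _ τ' _ h
    ext a
    have := List.map_inj_left.1 h a (List.mem_finRange a)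
    rw [this]
  · intro l hl
    simp only [List.mem_toFinset, List.mem_filter, List.mem_permutations, Function.comp] at hl
    have hlen : l.length = N := by simpa using hl.1.length_eq
    have hnd : l.Nodup := hl.1.nodup_iff.2 (List.nodup_finRange N)
    set g : Fin N → Fin N := fun p => l.get (p.cast hlen.symm) with hg
    have hinj : Function.Injective g := by
      intro p p' h
      have := hnd.injective_get h
      simpa using this
    have hmap : (List.finRange N).map g = l := by
      apply List.ext_getElem
      · simp [hlen]
      · intro n h1 h2
        simp [hg]
    refine ⟨Equiv.ofBijective g (Finite.injective_iff_bijective.1 hinj), ?_, ?_⟩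
    · simp only [Finset.mem_filter, Finset.mem_univ, true_and]
      rw [← List.map_map]
      change P (List.map f (List.map g _)) = true
      rw [hmap]; exact hl.2
    · exact hmap

theorem count_words {N v : ℕ} (f : Fin N → Fin v) (al : Fin N → Finset (Fin v)) :
    (Finset.univ.filter fun τ : Equiv.Perm (Fin N) => ∀ p, f (τ p) ∈ al p).card =
      ((Fintype.piFinset al).filter fun w => ∀ k, (Finset.univ.filter fun p => w p = k).card =
        (Finset.univ.filter fun p => f p = k).card).card *
      Fintype.card {g : Equiv.Perm (Fin N) // f ∘ g = f} := by
  rw [Finset.card_eq_sum_card_fiberwise (f := fun τ : Equiv.Perm (Fin N) => f ∘ τ)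
    (t := (Fintype.piFinset al).filter fun w => ∀ k, (Finset.univ.filter fun p => w p = k).card =
        (Finset.univ.filter fun p => f p = k).card)]
  · rw [Finset.sum_const_nat (m := Fintype.card {g : Equiv.Perm (Fin N) // f ∘ g = f})]
    intro w hw
    rw [Finset.mem_filter, Fintype.mem_piFinset] at hw
    obtain ⟨hw1, hw2⟩ := hw
    have hcard : ∀ k, Fintype.card {p // w p = k} = Fintype.card {p // f p = k} := by
      intro k; rw [Fintype.card_subtype, Fintype.card_subtype]; exact hw2 k
    obtain ⟨e, he⟩ : ∃ e : Equiv.Perm (Fin N), ∀ p, f (e p) = w p :=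
      ⟨Equiv.ofFiberEquiv (f := w) (g := f) fun c => Fintype.equivOfCardEq (hcard c),
        fun p => Equiv.ofFiberEquiv_map _ p⟩
    rw [Fintype.card_subtype]
    refine Finset.card_bij (fun τ _ => e.symm.trans τ) ?_ ?_ ?_
    · intro τ hτ
      simp only [Finset.mem_filter, Finset.mem_univ, true_and] at hτ ⊢
      ext1 p
      have := congrFun hτ.2 (e.symm p)
      simp only [Function.comp] at this
      simp [this, ← he]
    · intro τ _ τ' _ h
      ext p
      have := congrArg (fun g : Equiv.Perm (Fin N) => g (e p)) h
      simpa using congrArg Fin.val this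
    · intro g hg
      simp only [Finset.mem_filter, Finset.mem_univ, true_and] at hg
      have hg' : ∀ p, f (g p) = f p := fun p => congrFun hg p
      refine ⟨e.trans g, ?_, ?_⟩
      · simp only [Finset.mem_filter, Finset.mem_univ, true_and]
        refine ⟨fun p => ?_, ?_⟩
        · simp [hg', he, hw1]
        · ext1 p; simp [hg', he]
      · ext p; simp
  · intro τ hτ
    simp only [Finset.coe_filter, Finset.mem_univ, true_and, Set.mem_ofPred_eq] at hτ
    simp only [Finset.coe_filter, Fintype.mem_piFinset, Set.mem_ofPred_eq, Function.comp]
    refine ⟨hτ, fun k => ?_⟩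
    refine Finset.card_bij (fun p _ => τ p) ?_ ?_ ?_
    · intro p hp; simpa using hp
    · intro p _ p' _ h; exact τ.injective h
    · intro p hp
      exact ⟨τ.symm p, by simpa using hp, by simp⟩

open MvPolynomial in
theorem coeff_words {N v : ℕ} (al : Fin N → Finset (Fin v)) (n : Fin v →₀ ℕ) :
    coeff n (∏ p, ∑ k ∈ al p, X k : MvPolynomial (Fin v) ℤ) =
      ((Fintype.piFinset al).filter fun w => ∀ k, (Finset.univ.filter fun p => w p = k).card =
        n k).card := by
  rw [Finset.prod_univ_sum, coeff_sum, Finset.card_filter]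
  push_cast
  refine Finset.sum_congr rfl fun w _ => ?_
  have : (∏ p, X (w p) : MvPolynomial (Fin v) ℤ) =
      monomial (∑ p, Finsupp.single (w p) 1) 1 := by
    rw [monomial_sum_one]
    rfl
  rw [this, coeff_monomial]
  congr 1
  rw [Finsupp.ext_iff]
  apply propext
  refine forall_congr' fun k => ?_
  rw [Finsupp.finsetSum_apply, Finset.card_filter]
  simp only [Finsupp.single_apply]

open MvPolynomial in
theorem prod_allowed {v m F : ℕ} (c : Fin v → ℕ) (hc : ∑ k, c k = m) (B : List ℕ)
    (hB : B = (deckOf c).map (fun k => k.val + 1)) :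
    (∏ p : Fin (m + F), ∑ k ∈ Finset.univ.filter
      (fun k : Fin v => p.val < m → B.getD p.val 0 ≠ k.val + 1), X k : MvPolynomial (Fin v) ℤ) =
    (∏ k, ((∑ l, X l) - X k) ^ c k) * (∑ l, X l) ^ F := by
  have hlen : (deckOf c).length = m := by rw [deckOf_length, hc]
  rw [← Finset.prod_range (fun p => ∑ k ∈ Finset.univ.filter
      (fun k : Fin v => p < m → B.getD p 0 ≠ k.val + 1), (X k : MvPolynomial (Fin v) ℤ)),
    Finset.prod_range_add]
  congr 1
  · rw [← deckOf_prod]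
    conv_rhs => rw [← List.map_get_finRange (deckOf c), List.map_map, ← Fin.prod_univ_def]
    subst hlen
    rw [Finset.prod_range]
    refine Finset.prod_congr rfl fun p _ => ?_
    simp only [p.2, Function.comp, true_imp_iff, hB]
    have : (List.map (fun k : Fin v => k.val + 1) (deckOf c)).getD p.val 0
        = ((deckOf c).get p).val + 1 := by
      simp [List.getD]
    rw [this, ← Finset.add_sum_erase Finset.univ _ (Finset.mem_univ ((deckOf c).get p)),
      add_sub_cancel_left]
    refine Finset.sum_congr ?_ fun _ _ => rfl
    ext k
    simp [Fin.ext_iff, eq_comm]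
  · rw [Finset.prod_congr rfl (g := fun _ => ∑ l, X l)]
    · simp
    · intro p _
      refine Finset.sum_congr ?_ fun _ _ => rfl
      ext k
      simp

theorem advProb_eq (v s m F : ℕ) (hF : m + F = s * v) :
    ∃ K : ℚ, 0 < K ∧ ∀ b : List ℕ, b.length = v → b.sum = m →
      advProb b (List.replicate v s) = K * (Fb s F (fun k : Fin v => b.getD k 0) : ℚ) := by
  set D : List (Fin v) := deckOf (fun _ => s) with hD
  have hDl : D.length = m + F := by
    rw [hD, deckOf_length, hF]; simp [mul_comm]
  have hdeck : deckList (List.replicate v s) = D.map (fun k => k.val + 1) := by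
    rw [deckList_eq (v := v) _ (by simp), hD]
    congr 2
    ext k
    simp [List.getD]
  set f : Fin (m + F) → Fin v := fun p => D.get (p.cast hDl.symm) with hf
  have hDf : (List.finRange (m + F)).map f = D := by
    apply List.ext_getElem
    · simp [hDl]
    · intro n h1 h2; simp [hf]
  have hfc : ∀ k, (Finset.univ.filter fun p => f p = k).card = s := by
    intro k
    have h1 : D.count k = s := by rw [hD, deckOf_count]
    rw [← h1, ← card_get]
    refine Finset.card_bij (fun p _ => p.cast hDl.symm) ?_ ?_ ?_
    · intro p hp; simpa [hf] using hp
    · intro p _ p' _ h; simpa using h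
    · intro p hp; exact ⟨p.cast hDl, by simpa [hf] using hp, by simp⟩
  refine ⟨(Fintype.card {g : Equiv.Perm (Fin (m + F)) // f ∘ g = f} : ℚ) /
    ((deckList (List.replicate v s)).length.factorial : ℚ), ?_, ?_⟩
  · apply div_pos
    · rw [Nat.cast_pos, Fintype.card_pos_iff]
      exact ⟨⟨1, rfl⟩⟩
    · exact_mod_cast Nat.factorial_pos _
  · intro b hb hbm
    set c : Fin v → ℕ := fun k => b.getD k 0 with hc
    have hcs : ∑ k, c k = m := by
      rw [← hbm]
      subst hb
      rw [← Fin.sum_univ_getElem]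
      refine Finset.sum_congr rfl fun k _ => ?_
      simp [hc]
    rw [advProb, winProb, hbm]
    have hcount : (deckList (List.replicate v s)).permutations.countP
        (fun d => winsAux (bidStrat b) [] m d) =
        (Finset.univ.filter fun τ : Equiv.Perm (Fin (m + F)) => ∀ p, f (τ p) ∈
          Finset.univ.filter (fun k : Fin v => p.val < m →
            (deckList b).getD p.val 0 ≠ k.val + 1)).card := by
      have : deckList (List.replicate v s) =
          (List.finRange (m + F)).map (fun p => (f p).val + 1) := by
        rw [hdeck]
        conv_lhs => rw [← hDf]
        rw [List.map_map]; rfl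
      rw [this, countP_perm]
      congr 1
      ext τ
      simp only [Finset.mem_filter, Finset.mem_univ, true_and]
      change winsAux (fun h => (deckList b).getD h.length 0) [] m _ = true ↔ _
      rw [winsAux_iff_s16]
      constructor
      · intro h p hp
        have := h p.val (by simp) hp
        simpa using this
      · intro h p hp hpm
        have := h ⟨p, by simpa using hp⟩ hpm
        simpa using this
    rw [hcount, count_words, Fb, ← prod_allowed c hcs (deckList b) (deckList_eq b hb), coeff_words]
    simp only [hfc, n0, Finsupp.equivFunOnFinite_symm_apply_apply]
    push_cast
    ring

end bridge

/-- For a regular deck (`v ≥ 3` values with `s` cards each), excluding the case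
`(v,s,m) = (3,1,3)`, the optimal advance bids of total size `m` are exactly the
almost regular ones: every entry is `⌊m/v⌋` or `⌈m/v⌉`. -/
theorem stmt16 (v s m : ℕ) (hv : 3 ≤ v) (hs : 1 ≤ s) (hm : m ≤ s * v)
    (hexc : ¬(v = 3 ∧ s = 1 ∧ m = 3)) (b : List ℕ)
    (hbl : b.length = v) (hbs : b.sum = m) :
    (∀ b' : List ℕ, b'.length = v → b'.sum = m →
        advProb b' (List.replicate v s) ≤ advProb b (List.replicate v s)) ↔
      ∀ x ∈ b, x = m / v ∨ x = m / v + 1 := by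
  obtain ⟨F, hF⟩ := Nat.exists_eq_add_of_le hm
  obtain ⟨K, hK, hadv⟩ := advProb_eq v s m F hF.symm
  have hsum : ∀ b' : List ℕ, b'.length = v → b'.sum = m →
      ∑ k : Fin v, b'.getD k 0 = m := by
    intro b' h1 h2
    subst h1
    rw [← h2, ← Fin.sum_univ_getElem]
    refine Finset.sum_congr rfl fun k _ => ?_
    simp
  have hmain := main_iff (σ := Fin v) (s := s) (m := m) (F := F) hs (by simpa using hv)
    (by simpa using hF.symm) (by simpa using hexc) (fun k => b.getD k 0) (hsum b hbl hbs)
  rw [Fintype.card_fin] at hmain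
  have hAR : AR (m / v) (fun k : Fin v => b.getD k 0) ↔ ∀ x ∈ b, x = m / v ∨ x = m / v + 1 := by
    unfold AR
    subst hbl
    rw [List.forall_mem_iff_getElem]
    constructor
    · intro h i hi
      have := h ⟨i, hi⟩
      simpa [hi] using this
    · intro h k
      have := h k.val k.2
      simpa using this
  rw [← hAR, ← hmain]
  constructor
  · intro h b' hb'
    have h1 := h (List.ofFn b') (by simp) (by rw [List.sum_ofFn]; exact hb')
    rw [hadv b hbl hbs, hadv _ (by simp) (by rw [List.sum_ofFn]; exact hb')] at h1
    have h2 := le_of_mul_le_mul_left h1 hK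
    have h3 : (fun k : Fin v => (List.ofFn b').getD k 0) = b' := by
      ext k; simp
    rw [h3] at h2
    exact_mod_cast h2
  · intro h b' h1 h2
    rw [hadv b hbl hbs, hadv b' h1 h2]
    apply mul_le_mul_of_nonneg_left _ hK.le
    exact_mod_cast h _ (hsum b' h1 h2)
end
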